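/- There exists a Riemannian metric g of class C^{2,1} on the open unit ball B₁ ⊂ ℝ² (i.e. g is twice continuously differentiable with Lipschitz continuous second derivatives) such that for every radius r with 0 < r ≤ 1 there is no injective map u : B_r → ℝ³ of class C² satisfying (∇u(x))ᵀ ∇u(x) = g(x) for all x ∈ B_r; that is, no neighborhood of the origin in (B₁, g) can be realized as a C² surface in ℝ³. (Pogorelov's counterexample, 1972.) -/

import Mathlib

noncomputable section
open Matrix Set Metric

attribute [local instance] Matrix.normedAddCommGroup Matrix.normedSpace

abbrev E2 := EuclideanSpace ℝ (Fin 2)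

/-- The Jacobian matrix (3×2) of a map `u : ℝ² → ℝ³` at a point `x`. -/
def Jac (u : E2 → EuclideanSpace ℝ (Fin 3)) (x : E2) : Matrix (Fin 3) (Fin 2) ℝ :=
  Matrix.of fun i j => fderiv ℝ u x (EuclideanSpace.single j 1) i

open Topology Filter
open scoped InnerProductSpace

/-- `f : ℝ × ℝ → V` is differentiable at `z` with partial derivatives `a` and `b`. -/
def HasGrad {V : Type*} [NormedAddCommGroup V] [NormedSpace ℝ V]
    (f : ℝ × ℝ → V) (a b : V) (z : ℝ × ℝ) : Prop :=
  HasFDerivAt f ((ContinuousLinearMap.fst ℝ ℝ ℝ).smulRight a +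
    (ContinuousLinearMap.snd ℝ ℝ ℝ).smulRight b) z

/-- `f` is twice continuously differentiable on `Ω`, with the listed partial derivatives. -/
structure HasJet {V : Type*} [NormedAddCommGroup V] [NormedSpace ℝ V]
    (f fx fy fxx fxy fyy : ℝ × ℝ → V) (Ω : Set (ℝ × ℝ)) : Prop where
  grad : ∀ z ∈ Ω, HasGrad f (fx z) (fy z) z
  gradx : ∀ z ∈ Ω, HasGrad fx (fxx z) (fxy z) z
  grady : ∀ z ∈ Ω, HasGrad fy (fxy z) (fyy z) z
  contxx : ContinuousOn fxx Ω
  contxy : ContinuousOn fxy Ω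
  contyy : ContinuousOn fyy Ω

section Grad

variable {V : Type*} [NormedAddCommGroup V] [NormedSpace ℝ V]

lemma HasFDerivAt.hasGrad {f : ℝ × ℝ → V} {L : ℝ × ℝ →L[ℝ] V} {z : ℝ × ℝ} {a b : V}
    (h : HasFDerivAt f L z) (ha : L (1, 0) = a) (hb : L (0, 1) = b) : HasGrad f a b z := by
  subst ha hb
  unfold HasGrad
  convert h using 1
  ext <;> simp

lemma HasGrad.continuousAt {f : ℝ × ℝ → V} {a b : V} {z : ℝ × ℝ} (h : HasGrad f a b z) :
    ContinuousAt f z := HasFDerivAt.continuousAt h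

lemma HasGrad.hasDerivAt_comp {f : ℝ × ℝ → V} {a b : V} {γ₁ γ₂ : ℝ → ℝ} {c₁ c₂ t : ℝ}
    (h : HasGrad f a b (γ₁ t, γ₂ t)) (h₁ : HasDerivAt γ₁ c₁ t) (h₂ : HasDerivAt γ₂ c₂ t) :
    HasDerivAt (fun s => f (γ₁ s, γ₂ s)) (c₁ • a + c₂ • b) t := by
  have := HasFDerivAt.comp_hasDerivAt (l := f) (f := fun s => (γ₁ s, γ₂ s)) t h (h₁.prodMk h₂)
  simpa [Function.comp_def] using this

lemma HasGrad.hasDerivAt_fst {f : ℝ × ℝ → V} {a b : V} {x y : ℝ} (h : HasGrad f a b (x, y)) :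
    HasDerivAt (fun s => f (s, y)) a x := by
  simpa using HasGrad.hasDerivAt_comp (γ₁ := fun s => s) (γ₂ := fun _ => y) h
    (hasDerivAt_id' x) (hasDerivAt_const x y)

lemma HasGrad.hasDerivAt_snd {f : ℝ × ℝ → V} {a b : V} {x y : ℝ} (h : HasGrad f a b (x, y)) :
    HasDerivAt (fun s => f (x, s)) b y := by
  simpa using HasGrad.hasDerivAt_comp (γ₁ := fun _ => x) (γ₂ := fun s => s) h
    (hasDerivAt_const y x) (hasDerivAt_id' y)

lemma HasGrad.unique {f : ℝ × ℝ → V} {a b a' b' : V} {z : ℝ × ℝ}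
    (h : HasGrad f a b z) (h' : HasGrad f a' b' z) : a = a' ∧ b = b' :=
  ⟨HasDerivAt.unique (HasGrad.hasDerivAt_fst (x := z.1) (y := z.2) h)
      (HasGrad.hasDerivAt_fst (x := z.1) (y := z.2) h'),
    HasDerivAt.unique (HasGrad.hasDerivAt_snd (x := z.1) (y := z.2) h)
      (HasGrad.hasDerivAt_snd (x := z.1) (y := z.2) h')⟩

lemma HasGrad.symmetric {f fx fy : ℝ × ℝ → V} {a b c d : V} {z : ℝ × ℝ}
    (hf : ∀ᶠ w in 𝓝 z, HasGrad f (fx w) (fy w) w) (hx : HasGrad fx a b z)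
    (hy : HasGrad fy c d z) : b = c := by
  have h := second_derivative_symmetric_of_eventually (𝕜 := ℝ) hf
    (f'' := (ContinuousLinearMap.smulRightL ℝ (ℝ × ℝ) V (ContinuousLinearMap.fst ℝ ℝ ℝ)).comp
        ((ContinuousLinearMap.fst ℝ ℝ ℝ).smulRight a + (ContinuousLinearMap.snd ℝ ℝ ℝ).smulRight b)
      + (ContinuousLinearMap.smulRightL ℝ (ℝ × ℝ) V (ContinuousLinearMap.snd ℝ ℝ ℝ)).comp
        ((ContinuousLinearMap.fst ℝ ℝ ℝ).smulRight c + (ContinuousLinearMap.snd ℝ ℝ ℝ).smulRight d))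
    (((ContinuousLinearMap.smulRightL ℝ (ℝ × ℝ) V
        (ContinuousLinearMap.fst ℝ ℝ ℝ)).hasFDerivAt.comp z hx).add
      ((ContinuousLinearMap.smulRightL ℝ (ℝ × ℝ) V
        (ContinuousLinearMap.snd ℝ ℝ ℝ)).hasFDerivAt.comp z hy)) (0, 1) (1, 0)
  simpa using h

lemma HasGrad.comp_swap {f : ℝ × ℝ → V} {a b : V} {z : ℝ × ℝ} (h : HasGrad f a b z.swap) :
    HasGrad (f ∘ Prod.swap) b a z := by
  refine HasFDerivAt.hasGrad (HasFDerivAt.comp z h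
    (ContinuousLinearEquiv.prodComm ℝ ℝ ℝ).hasFDerivAt) ?_ ?_ <;> simp

lemma HasJet.comp_swap {f fx fy fxx fxy fyy : ℝ × ℝ → V} {Ω : Set (ℝ × ℝ)}
    (h : HasJet f fx fy fxx fxy fyy Ω) :
    HasJet (f ∘ Prod.swap) (fy ∘ Prod.swap) (fx ∘ Prod.swap) (fyy ∘ Prod.swap)
      (fxy ∘ Prod.swap) (fxx ∘ Prod.swap) (Prod.swap ⁻¹' Ω) where
  grad _ hz := (h.grad _ hz).comp_swap
  gradx _ hz := (h.grady _ hz).comp_swap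
  grady _ hz := (h.gradx _ hz).comp_swap
  contxx := h.contyy.comp continuous_swap.continuousOn fun _ hz => hz
  contxy := h.contxy.comp continuous_swap.continuousOn fun _ hz => hz
  contyy := h.contxx.comp continuous_swap.continuousOn fun _ hz => hz

lemma HasJet.mono {f fx fy fxx fxy fyy : ℝ × ℝ → V} {Ω Ω' : Set (ℝ × ℝ)}
    (h : HasJet f fx fy fxx fxy fyy Ω) (hΩ : Ω' ⊆ Ω) : HasJet f fx fy fxx fxy fyy Ω' where
  grad z hz := h.grad z (hΩ hz)
  gradx z hz := h.gradx z (hΩ hz)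
  grady z hz := h.grady z (hΩ hz)
  contxx := h.contxx.mono hΩ
  contxy := h.contxy.mono hΩ
  contyy := h.contyy.mono hΩ

end Grad

lemma second_difference_le {f f' f'' : ℝ → ℝ} {y₀ l C : ℝ} (hl : 0 ≤ l)
    (hf : ∀ y ∈ Icc (y₀ - l) (y₀ + l), HasDerivAt f (f' y) y)
    (hf' : ∀ y ∈ Icc (y₀ - l) (y₀ + l), HasDerivAt f' (f'' y) y)
    (h : ∀ y ∈ Icc (y₀ - l) (y₀ + l), f'' y ≤ -C) :
    f (y₀ + l) + f (y₀ - l) - 2 * f y₀ ≤ -C * l ^ 2 := by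
  have anti : AntitoneOn (fun y => f' y + C * y) (Icc (y₀ - l) (y₀ + l)) := by
    have hd : ∀ y ∈ Icc (y₀ - l) (y₀ + l),
        HasDerivAt (fun y => f' y + C * y) (f'' y + C) y := fun y hy => by
      simpa only [mul_one] using (hf' y hy).fun_add ((hasDerivAt_id' y).const_mul C)
    refine antitoneOn_of_hasDerivWithinAt_nonpos (convex_Icc _ _)
      (fun y hy => (hd y hy).continuousAt.continuousWithinAt)
      (fun y hy => (hd y (interior_subset hy)).hasDerivWithinAt) fun y hy => ?_
    linarith [h y (interior_subset hy)]
  have hmem : ∀ t ∈ Icc 0 l, y₀ + t ∈ Icc (y₀ - l) (y₀ + l) ∧ y₀ - t ∈ Icc (y₀ - l) (y₀ + l) := by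
    rintro t ⟨h0, h1⟩
    constructor <;> constructor <;> linarith
  have anti' : AntitoneOn (fun t => f (y₀ + t) + f (y₀ - t) + C * t ^ 2) (Icc 0 l) := by
    have hd : ∀ t ∈ Icc 0 l, HasDerivAt (fun t => f (y₀ + t) + f (y₀ - t) + C * t ^ 2)
        (f' (y₀ + t) - f' (y₀ - t) + 2 * C * t) t := fun t ht => by
      have h1 := (hf _ (hmem t ht).1).comp_const_add y₀ t
      have h2 := (hf _ (hmem t ht).2).comp_const_sub y₀ t
      have h3 := ((hasDerivAt_id' t).pow 2).const_mul C
      refine ((h1.fun_add h2).fun_add h3).congr_deriv ?_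
      norm_num
      ring
    refine antitoneOn_of_hasDerivWithinAt_nonpos (convex_Icc _ _)
      (fun y hy => (hd y hy).continuousAt.continuousWithinAt)
      (fun y hy => (hd y (interior_subset hy)).hasDerivWithinAt) fun t ht => ?_
    have ht' := interior_subset ht
    have := anti (hmem t ht').2 (hmem t ht').1 (by linarith [ht'.1])
    simp only at this
    linarith
  have := anti' (left_mem_Icc.2 hl) (right_mem_Icc.2 hl) hl
  simp at this
  linarith

lemma HasGrad.comp_graph {V : Type*} [NormedAddCommGroup V] [NormedSpace ℝ V]
    {f : ℝ × ℝ → V} {χ : ℝ × ℝ → ℝ} {a b : V} {c d : ℝ} {w : ℝ × ℝ}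
    (hf : HasGrad f a b (χ w, w.2)) (hχ : HasGrad χ c d w) :
    HasGrad (fun w => f (χ w, w.2)) (c • a) (d • a + b) w := by
  refine HasFDerivAt.hasGrad (HasFDerivAt.comp w (g := f) (f := fun w => (χ w, w.2)) hf
    (HasFDerivAt.prodMk hχ hasFDerivAt_snd)) ?_ ?_ <;> simp

lemma HasGrad.mul {f g : ℝ × ℝ → ℝ} {a b c d : ℝ} {z : ℝ × ℝ} (hf : HasGrad f a b z)
    (hg : HasGrad g c d z) :
    HasGrad (fun w => f w * g w) (a * g z + f z * c) (b * g z + f z * d) z := by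
  refine HasFDerivAt.hasGrad (HasFDerivAt.mul hf hg) ?_ ?_ <;> simp <;> ring

lemma HasGrad.sub {V : Type*} [NormedAddCommGroup V] [NormedSpace ℝ V]
    {f g : ℝ × ℝ → V} {a b c d : V} {z : ℝ × ℝ} (hf : HasGrad f a b z)
    (hg : HasGrad g c d z) : HasGrad (fun w => f w - g w) (a - c) (b - d) z := by
  refine HasFDerivAt.hasGrad (HasFDerivAt.sub hf hg) ?_ ?_ <;> simp

lemma HasGrad.neg {V : Type*} [NormedAddCommGroup V] [NormedSpace ℝ V]
    {f : ℝ × ℝ → V} {a b : V} {z : ℝ × ℝ} (hf : HasGrad f a b z) :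
    HasGrad (fun w => - f w) (-a) (-b) z := by
  refine HasFDerivAt.hasGrad (HasFDerivAt.neg hf) ?_ ?_ <;> simp

lemma HasGrad.fst (z : ℝ × ℝ) : HasGrad Prod.fst (1 : ℝ) 0 z :=
  hasFDerivAt_fst.hasGrad (by simp) (by simp)

/-- Local inversion of `x ↦ φₓ (x, y)` with `y` as a parameter. -/
lemma HasJet.exists_partial_inverse {φ φx φy φxx φxy φyy : ℝ × ℝ → ℝ} {Ω : Set (ℝ × ℝ)}
    (hφ : HasJet φ φx φy φxx φxy φyy Ω) (hΩ : IsOpen Ω) {x₀ y₀ : ℝ} (hq : (x₀, y₀) ∈ Ω)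
    (hpos : 0 < φxx (x₀, y₀)) :
    ∃ χ : ℝ × ℝ → ℝ, χ (φx (x₀, y₀), y₀) = x₀ ∧
      ∀ᶠ w in 𝓝 (φx (x₀, y₀), y₀), (χ w, w.2) ∈ Ω ∧ 0 < φxx (χ w, w.2) ∧
        φx (χ w, w.2) = w.1 ∧
        HasGrad χ (1 / φxx (χ w, w.2)) (-φxy (χ w, w.2) / φxx (χ w, w.2)) w := by
  have key : ∀ z ∈ Ω, 0 < φxx z → ∃ e : (ℝ × ℝ) ≃L[ℝ] (ℝ × ℝ),
      HasFDerivAt (fun z : ℝ × ℝ => (φx z, z.2)) (e : ℝ × ℝ →L[ℝ] ℝ × ℝ) z ∧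
      e.symm (1, 0) = (1 / φxx z, 0) ∧ e.symm (0, 1) = (-φxy z / φxx z, 1) := by
    intro z hz hzp
    let L : ℝ × ℝ →L[ℝ] ℝ × ℝ := ((ContinuousLinearMap.fst ℝ ℝ ℝ).smulRight (φxx z) +
      (ContinuousLinearMap.snd ℝ ℝ ℝ).smulRight (φxy z)).prod (ContinuousLinearMap.snd ℝ ℝ ℝ)
    let M : ℝ × ℝ →L[ℝ] ℝ × ℝ := ((ContinuousLinearMap.fst ℝ ℝ ℝ).smulRight (1 / φxx z) +
      (ContinuousLinearMap.snd ℝ ℝ ℝ).smulRight (-φxy z / φxx z)).prod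
        (ContinuousLinearMap.snd ℝ ℝ ℝ)
    have h1 : Function.LeftInverse M L := fun v => by
      ext <;> simp [L, M]
      field_simp
      ring
    have h2 : Function.RightInverse M L := fun v => by
      ext <;> simp [L, M]
      field_simp
      ring
    refine ⟨ContinuousLinearEquiv.equivOfInverse L M h1 h2, ?_, ?_, ?_⟩
    · exact HasFDerivAt.prodMk (hφ.gradx z hz) hasFDerivAt_snd
    · simp [ContinuousLinearEquiv.symm_equivOfInverse, M]
    · simp [ContinuousLinearEquiv.symm_equivOfInverse, M]
  obtain ⟨e₀, he₀, -, -⟩ := key _ hq hpos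
  have hnear : ∀ᶠ z in 𝓝 (x₀, y₀), z ∈ Ω ∧ 0 < φxx z :=
    (hΩ.eventually_mem hq).and
      ((hφ.contxx.continuousAt (hΩ.mem_nhds hq)).eventually (lt_mem_nhds hpos))
  have hstrict : HasStrictFDerivAt (fun z : ℝ × ℝ => (φx z, z.2))
      (e₀ : ℝ × ℝ →L[ℝ] ℝ × ℝ) (x₀, y₀) := by
    have hs : HasStrictFDerivAt φx ((ContinuousLinearMap.fst ℝ ℝ ℝ).smulRight (φxx (x₀, y₀)) +
        (ContinuousLinearMap.snd ℝ ℝ ℝ).smulRight (φxy (x₀, y₀))) (x₀, y₀) := by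
      refine hasStrictFDerivAt_of_hasFDerivAt_of_continuousAt
        (f' := fun z => (ContinuousLinearMap.fst ℝ ℝ ℝ).smulRight (φxx z) +
          (ContinuousLinearMap.snd ℝ ℝ ℝ).smulRight (φxy z))
        (hnear.mono fun z hz => hφ.gradx z hz.1) ?_
      have h1 := hφ.contxx.continuousAt (hΩ.mem_nhds hq)
      have h2 := hφ.contxy.continuousAt (hΩ.mem_nhds hq)
      exact (((ContinuousLinearMap.smulRightL ℝ (ℝ × ℝ) ℝ
        (ContinuousLinearMap.fst ℝ ℝ ℝ)).continuous.continuousAt.comp h1)).add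
        ((ContinuousLinearMap.smulRightL ℝ (ℝ × ℝ) ℝ
        (ContinuousLinearMap.snd ℝ ℝ ℝ)).continuous.continuousAt.comp h2)
    have := hs.prodMk hasStrictFDerivAt_snd
    rwa [← he₀.unique this.hasFDerivAt] at this
  let E := hstrict.toOpenPartialHomeomorph _
  have hE : ∀ z, E z = (φx z, z.2) := fun z => rfl
  have hsrc : (x₀, y₀) ∈ E.source := hstrict.mem_toOpenPartialHomeomorph_source
  have htgt : (φx (x₀, y₀), y₀) ∈ E.target := E.map_source hsrc
  have hinv : E.symm (φx (x₀, y₀), y₀) = (x₀, y₀) := E.left_inv hsrc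
  refine ⟨fun w => (E.symm w).1, by simp [hinv], ?_⟩
  have hcont : Tendsto E.symm (𝓝 (φx (x₀, y₀), y₀)) (𝓝 (x₀, y₀)) := by
    have := E.continuousAt_symm htgt
    rwa [ContinuousAt, hinv] at this
  filter_upwards [E.open_target.mem_nhds htgt, hcont.eventually hnear] with w hw hw'
  have hright : (φx (E.symm w), (E.symm w).2) = w := E.right_inv hw
  have hpt : ((E.symm w).1, w.2) = E.symm w := by
    conv_lhs => rw [← hright]
    simp [hright]
  obtain ⟨e, he, h1, h2⟩ := key _ hw'.1 hw'.2
  have hd := E.hasFDerivAt_symm hw (f' := e) he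
  rw [hpt]
  refine ⟨hw'.1, hw'.2, congrArg Prod.fst hright, ?_⟩
  refine HasFDerivAt.hasGrad (hasFDerivAt_fst.comp w hd) ?_ ?_
  · simp [h1]
  · simp [h2]

lemma abs_sub_le_of_hasDerivAt {f f' : ℝ → ℝ} {s : Set ℝ} {C x y : ℝ} (hs : Convex ℝ s)
    (hf : ∀ t ∈ s, HasDerivAt f (f' t) t) (hC : ∀ t ∈ s, |f' t| ≤ C) (hx : x ∈ s) (hy : y ∈ s) :
    |f y - f x| ≤ C * |y - x| :=
  hs.norm_image_sub_le_of_norm_hasDerivWithin_le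
    (fun t ht => (hf t ht).hasDerivWithinAt) hC hx hy

set_option maxHeartbeats 1000000 in
/-- A Legendre transform `H` whose second derivative in `y` vanishes for `p ≤ p₀`, but is bounded
above by `-c Q` where the quadratic `Q` is positive, cannot exist. -/
lemma legendre_contradiction {H χ ψ m n h : ℝ × ℝ → ℝ} {p₀ y₀ r a b ρ c : ℝ} (hr : 0 < r)
    (hc : 0 < c)
    (hH : ∀ p ∈ Icc (p₀ - r) (p₀ + r), ∀ y ∈ Icc (y₀ - r) (y₀ + r),
      HasGrad H (χ (p, y)) (ψ (p, y)) (p, y))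
    (hχ : ∀ p ∈ Icc (p₀ - r) (p₀ + r), ∀ y ∈ Icc (y₀ - r) (y₀ + r),
      HasGrad χ (m (p, y)) (n (p, y)) (p, y))
    (hψ : ∀ p ∈ Icc (p₀ - r) (p₀ + r), ∀ y ∈ Icc (y₀ - r) (y₀ + r),
      HasGrad ψ (n (p, y)) (h (p, y)) (p, y))
    (hm : ContinuousAt m (p₀, y₀)) (hm₀ : 0 < m (p₀, y₀))
    (hQ : ∀ p ∈ Icc (p₀ - r) (p₀ + r), ∀ y ∈ Icc (y₀ - r) (y₀ + r), p ≤ p₀ →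
      ρ ^ 2 - (χ (p, y) - a) ^ 2 - (y - b) ^ 2 ≤ 0)
    (hzero : ∀ p ∈ Icc (p₀ - r) (p₀ + r), ∀ y ∈ Icc (y₀ - r) (y₀ + r),
      ρ ^ 2 - (χ (p, y) - a) ^ 2 - (y - b) ^ 2 ≤ 0 → h (p, y) = 0)
    (hneg : ∀ p ∈ Icc (p₀ - r) (p₀ + r), ∀ y ∈ Icc (y₀ - r) (y₀ + r),
      0 < ρ ^ 2 - (χ (p, y) - a) ^ 2 - (y - b) ^ 2 →
      h (p, y) ≤ -(c * (ρ ^ 2 - (χ (p, y) - a) ^ 2 - (y - b) ^ 2)))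
    (hq : ρ ^ 2 - (χ (p₀, y₀) - a) ^ 2 - (y₀ - b) ^ 2 = 0) (hρ : 0 < ρ)
    (hxa : χ (p₀, y₀) ≤ a) : False := by
  have hp₀ : p₀ ∈ Icc (p₀ - r) (p₀ + r) := ⟨by linarith, by linarith⟩
  have hy₀ : y₀ ∈ Icc (y₀ - r) (y₀ + r) := ⟨by linarith, by linarith⟩
  have hψc : ∀ p ∈ Icc (p₀ - r) (p₀ + r), p ≤ p₀ → ∀ y ∈ Icc (y₀ - r) (y₀ + r),
      ψ (p, y) = ψ (p, y₀) := by
    intro p hp hpp y hy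
    have := abs_sub_le_of_hasDerivAt (C := 0) (convex_Icc (y₀ - r) (y₀ + r))
      (fun t ht => (hψ p hp t ht).hasDerivAt_snd)
      (fun t ht => by rw [hzero p hp t ht (hQ p hp t ht hpp), abs_zero]) hy₀ hy
    rw [zero_mul] at this
    linarith [abs_nonpos_iff.1 this]
  set α := n (p₀, y₀) with hα
  have hn : ∀ y ∈ Icc (y₀ - r) (y₀ + r), n (p₀, y) = α := by
    intro y hy
    have h1 : HasDerivWithinAt (fun p => ψ (p, y) - ψ (p, y₀)) (n (p₀, y) - α) (Iic p₀) p₀ :=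
      ((hψ p₀ hp₀ y hy).hasDerivAt_fst.sub (hψ p₀ hp₀ y₀ hy₀).hasDerivAt_fst).hasDerivWithinAt
    have h2 : HasDerivWithinAt (fun p => ψ (p, y) - ψ (p, y₀)) 0 (Iic p₀) p₀ := by
      refine (hasDerivWithinAt_const p₀ (Iic p₀) (0 : ℝ)).congr_of_eventuallyEq ?_ ?_
      · filter_upwards [self_mem_nhdsWithin, mem_nhdsWithin_of_mem_nhds
          (Icc_mem_nhds (show p₀ - r < p₀ by linarith) (show p₀ < p₀ + r by linarith))]
          with p hp hp'
        rw [hψc p hp' hp y hy, sub_self]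
      · rw [hψc p₀ hp₀ le_rfl y hy, sub_self]
    linarith [(uniqueDiffWithinAt_Iic p₀).eq_deriv _ h1 h2]
  have hχα : ∀ y ∈ Icc (y₀ - r) (y₀ + r), χ (p₀, y) = χ (p₀, y₀) + α * (y - y₀) := by
    intro y hy
    have := abs_sub_le_of_hasDerivAt (C := 0) (f := fun y => χ (p₀, y) - α * y)
      (f' := fun y => n (p₀, y) - α) (convex_Icc (y₀ - r) (y₀ + r))
      (fun t ht => by
        simpa only [mul_one] using
          (hχ p₀ hp₀ t ht).hasDerivAt_snd.fun_sub ((hasDerivAt_id' t).const_mul α))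
      (fun t ht => by rw [hn t ht, sub_self, abs_zero]) hy₀ hy
    rw [zero_mul] at this
    linarith [abs_nonpos_iff.1 this]
  have hHα : ∀ y ∈ Icc (y₀ - r) (y₀ + r),
      H (p₀, y) = H (p₀, y₀) + ψ (p₀, y₀) * (y - y₀) := by
    intro y hy
    have := abs_sub_le_of_hasDerivAt (C := 0) (f := fun y => H (p₀, y) - ψ (p₀, y₀) * y)
      (f' := fun y => ψ (p₀, y) - ψ (p₀, y₀)) (convex_Icc (y₀ - r) (y₀ + r))
      (fun t ht => by
        simpa only [mul_one] using
          (hH p₀ hp₀ t ht).hasDerivAt_snd.fun_sub ((hasDerivAt_id' t).const_mul (ψ (p₀, y₀))))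
      (fun t ht => by rw [hψc p₀ hp₀ le_rfl t ht, sub_self, abs_zero]) hy₀ hy
    rw [zero_mul] at this
    linarith [abs_nonpos_iff.1 this]
  set x₀ := χ (p₀, y₀) with hx₀
  set β := a - x₀ with hβ
  -- the line `p = p₀` is tangent to the circle
  have htan : y₀ - b = α * β := by
    have hd : HasDerivAt (fun y => ρ ^ 2 - (x₀ + α * (y - y₀) - a) ^ 2 - (y - b) ^ 2)
        (2 * (α * β - (y₀ - b))) y₀ := by
      have h1 : HasDerivAt (fun y => x₀ + α * (y - y₀) - a) α y₀ := by
        simpa using ((((hasDerivAt_id' y₀).sub_const y₀).const_mul α).const_add x₀).sub_const a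
      have h2 : HasDerivAt (fun y => y - b) 1 y₀ := (hasDerivAt_id' y₀).sub_const b
      refine (((h1.fun_pow 2).const_sub (ρ ^ 2)).fun_sub (h2.fun_pow 2)).congr_deriv ?_
      norm_num
      rw [hβ]
      ring
    have hmax : IsLocalMax (fun y => ρ ^ 2 - (x₀ + α * (y - y₀) - a) ^ 2 - (y - b) ^ 2) y₀ := by
      filter_upwards [Icc_mem_nhds (show y₀ - r < y₀ by linarith) (show y₀ < y₀ + r by linarith)]
        with y hy
      have := hQ p₀ hp₀ y hy le_rfl
      rw [hχα y hy] at this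
      simp only [sub_self, mul_zero, add_zero]
      linarith
    linarith [hmax.hasDerivAt_eq_zero hd]
  have hβ0 : 0 < β := by
    refine lt_of_le_of_ne (by linarith) fun h => ?_
    rw [htan, ← h, show x₀ - a = 0 by linarith] at hq
    nlinarith
  set m₀ := m (p₀, y₀) with hm₀'
  set c₁ := m₀ * β * c / 4 with hc₁
  set η := m₀ * β / (4 * (1 + α ^ 2)) with hη
  have hα1 : 0 < 1 + α ^ 2 := by positivity
  have hc₁0 : 0 < c₁ := by positivity
  have hη0 : 0 < η := by positivity
  have hηα : η * (1 + α ^ 2) = m₀ * β / 4 := by rw [hη]; field_simp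
  set ε := min (c₁ * η / 8) (m₀ / 2) with hε
  have hε0 : 0 < ε := lt_min (by positivity) (by positivity)
  obtain ⟨s, hs0, hsr, hs⟩ : ∃ s > 0, s ≤ r ∧ ∀ p ∈ Icc (p₀ - s) (p₀ + s),
      ∀ y ∈ Icc (y₀ - s) (y₀ + s), |m (p, y) - m₀| ≤ ε := by
    obtain ⟨s, hs0, hs⟩ := Metric.continuousAt_iff.1 hm ε hε0
    refine ⟨min (s / 2) r, lt_min (by positivity) hr, min_le_right _ _, fun p hp y hy => ?_⟩
    refine (hs (x := (p, y)) ?_).le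
    have h2 := min_le_left (s / 2) r
    rw [Prod.dist_eq, max_lt_iff, Real.dist_eq, Real.dist_eq, abs_lt, abs_lt]
    exact ⟨⟨by linarith [hp.1], by linarith [hp.2]⟩, ⟨by linarith [hy.1], by linarith [hy.2]⟩⟩
  obtain ⟨d, hd0, hds, hls, hsmall⟩ : ∃ d > 0, d < s ∧ √(η * d) < s ∧
      2 * |α| * √(η * d) + 2 * m₀ * d < β / 4 := by
    have hl : Tendsto (fun d => √(η * d)) (𝓝[>] 0) (𝓝 0) := by
      have : Continuous fun d => √(η * d) := by fun_prop
      simpa using (this.tendsto 0).mono_left nhdsWithin_le_nhds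
    have hl' : Tendsto (fun d => 2 * |α| * √(η * d) + 2 * m₀ * d) (𝓝[>] 0) (𝓝 0) := by
      have : Continuous fun d => 2 * |α| * √(η * d) + 2 * m₀ * d := by fun_prop
      simpa using (this.tendsto 0).mono_left nhdsWithin_le_nhds
    have hid : Tendsto (fun d : ℝ => d) (𝓝[>] 0) (𝓝 0) := nhdsWithin_le_nhds
    have := (eventually_mem_nhdsWithin (a := (0 : ℝ)) (s := Ioi 0)).and
      ((hid.eventually (gt_mem_nhds hs0)).and
      ((hl.eventually (gt_mem_nhds hs0)).and
        (hl'.eventually (gt_mem_nhds (show 0 < β / 4 by positivity)))))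
    obtain ⟨d, h1, h2, h3, h4⟩ := this.exists
    exact ⟨d, h1, h2, h3, h4⟩
  set l := √(η * d) with hl
  have hl0 : 0 ≤ l := Real.sqrt_nonneg _
  have hll : l ^ 2 = η * d := Real.sq_sqrt (by positivity)
  have hIp : ∀ p ∈ Icc p₀ (p₀ + d), p ∈ Icc (p₀ - s) (p₀ + s) ∧ p ∈ Icc (p₀ - r) (p₀ + r) :=
    fun p hp => ⟨⟨by linarith [hp.1], by linarith [hp.2]⟩, ⟨by linarith [hp.1], by linarith [hp.2]⟩⟩
  have hIy : ∀ y ∈ Icc (y₀ - l) (y₀ + l),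
      y ∈ Icc (y₀ - s) (y₀ + s) ∧ y ∈ Icc (y₀ - r) (y₀ + r) :=
    fun y hy => ⟨⟨by linarith [hy.1], by linarith [hy.2]⟩, ⟨by linarith [hy.1], by linarith [hy.2]⟩⟩
  have hP : p₀ + d ∈ Icc p₀ (p₀ + d) := ⟨by linarith, le_rfl⟩
  have hP₀ : p₀ ∈ Icc p₀ (p₀ + d) := ⟨le_rfl, by linarith⟩
  have hχd : ∀ y ∈ Icc (y₀ - l) (y₀ + l), ∀ p ∈ Icc p₀ (p₀ + d),
      |χ (p, y) - χ (p₀, y) - m₀ * (p - p₀)| ≤ ε * d := by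
    intro y hy p hp
    have := abs_sub_le_of_hasDerivAt (C := ε) (f := fun p => χ (p, y) - m₀ * p)
      (f' := fun p => m (p, y) - m₀) (convex_Icc p₀ (p₀ + d))
      (fun t ht => by
        simpa only [mul_one] using
          (hχ t (hIp t ht).2 y (hIy y hy).2).hasDerivAt_fst.fun_sub
            ((hasDerivAt_id' t).const_mul m₀))
      (fun t ht => hs t (hIp t ht).1 y (hIy y hy).1) hP₀ hp
    calc |χ (p, y) - χ (p₀, y) - m₀ * (p - p₀)|
        = |χ (p, y) - m₀ * p - (χ (p₀, y) - m₀ * p₀)| := by congr 1; ring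
      _ ≤ ε * |p - p₀| := this
      _ ≤ ε * d := by
        gcongr
        rw [abs_of_nonneg] <;> linarith [hp.1, hp.2]
  have hHd : ∀ y ∈ Icc (y₀ - l) (y₀ + l),
      |H (p₀ + d, y) - H (p₀, y) - d * χ (p₀, y) - m₀ * d ^ 2 / 2| ≤ ε * d ^ 2 := by
    intro y hy
    have := abs_sub_le_of_hasDerivAt (C := ε * d)
      (f := fun p => H (p, y) - χ (p₀, y) * (p - p₀) - m₀ / 2 * (p - p₀) ^ 2)
      (f' := fun p => χ (p, y) - χ (p₀, y) - m₀ * (p - p₀)) (convex_Icc p₀ (p₀ + d))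
      (fun t ht => by
        have h1 : HasDerivAt (fun p => p - p₀) 1 t := (hasDerivAt_id' t).sub_const p₀
        refine (((hH t (hIp t ht).2 y (hIy y hy).2).hasDerivAt_fst.fun_sub
            (h1.const_mul (χ (p₀, y)))).fun_sub
            ((h1.fun_pow 2).const_mul (m₀ / 2))).congr_deriv ?_
        norm_num
        ring)
      (hχd y hy) hP₀ hP
    calc _ = _ := by congr 1; ring
      _ ≤ _ := this
      _ = _ := by rw [add_sub_cancel_left, abs_of_pos hd0]; ring
  have hupper := second_difference_le (f := fun y => H (p₀ + d, y)) (C := c₁ * d) hl0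
    (fun y hy => (hH _ (hIp _ hP).2 y (hIy y hy).2).hasDerivAt_snd)
    (fun y hy => (hψ _ (hIp _ hP).2 y (hIy y hy).2).hasDerivAt_snd)
    (fun y hy => by
      have he := hχd y hy _ hP
      rw [add_sub_cancel_left, abs_le] at he
      set e := χ (p₀ + d, y) - χ (p₀, y) with he'
      have hεm : ε * d ≤ m₀ / 2 * d := by gcongr; exact min_le_right _ _
      have he1 : m₀ * d / 2 ≤ e := by linarith
      have he2 : e ≤ 2 * m₀ * d := by nlinarith
      have he0 : 0 < e := lt_of_lt_of_le (by positivity) he1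
      have hχe : χ (p₀ + d, y) = x₀ + α * (y - y₀) + e := by
        rw [← hχα y (hIy y hy).2]; ring
      have hty : |y - y₀| ≤ l := abs_le.2 ⟨by linarith [hy.1], by linarith [hy.2]⟩
      have ht2 : (y - y₀) ^ 2 ≤ η * d := by rw [← hll, ← sq_abs (y - y₀)]; gcongr
      have hαt : α * (y - y₀) ≤ |α| * l := (le_abs_self _).trans (by rw [abs_mul]; gcongr)
      have ht3 : (1 + α ^ 2) * (y - y₀) ^ 2 ≤ m₀ * β / 4 * d := by
        rw [← hηα]; nlinarith
      have hQe : ρ ^ 2 - (χ (p₀ + d, y) - a) ^ 2 - (y - b) ^ 2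
          = 2 * β * e - e * (2 * (α * (y - y₀)) + e) - (1 + α ^ 2) * (y - y₀) ^ 2 := by
        have hyb : y - b = α * β + (y - y₀) := by linarith
        rw [hχe, show x₀ + α * (y - y₀) + e - a = -β + α * (y - y₀) + e by rw [hβ]; ring, hyb]
        have : ρ ^ 2 = β ^ 2 + (α * β) ^ 2 := by
          rw [← htan, hβ]
          linarith [hq, show (x₀ - a) ^ 2 = (a - x₀) ^ 2 by ring]
        rw [this]
        ring
      have hQl : m₀ * β * d / 4 ≤ ρ ^ 2 - (χ (p₀ + d, y) - a) ^ 2 - (y - b) ^ 2 := by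
        rw [hQe]
        have h5 : e * (2 * (α * (y - y₀)) + e) ≤ e * (β / 4) := by
          gcongr
          linarith
        have h6 : β * (m₀ * d / 2) ≤ β * e := by gcongr
        have h7 : 0 < m₀ * β * d := by positivity
        linarith
      refine (hneg _ (hIp _ hP).2 y (hIy y hy).2 (lt_of_lt_of_le (by positivity) hQl)).trans ?_
      rw [neg_le_neg_iff]
      calc c₁ * d = c * (m₀ * β * d / 4) := by rw [hc₁]; ring
        _ ≤ _ := by gcongr)
  have hyp : y₀ + l ∈ Icc (y₀ - l) (y₀ + l) := ⟨by linarith, by linarith⟩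
  have hym : y₀ - l ∈ Icc (y₀ - l) (y₀ + l) := ⟨by linarith, by linarith⟩
  have hyz : y₀ ∈ Icc (y₀ - l) (y₀ + l) := ⟨by linarith, by linarith⟩
  have e1 := (abs_le.1 (hHd _ hyp)).1
  have e2 := (abs_le.1 (hHd _ hym)).1
  have e3 := (abs_le.1 (hHd _ hyz)).2
  rw [hχα _ (hIy _ hyp).2, hHα _ (hIy _ hyp).2] at e1
  rw [hχα _ (hIy _ hym).2, hHα _ (hIy _ hym).2] at e2
  rw [← hx₀] at e3
  have hε1 : ε * d ^ 2 ≤ c₁ * η / 8 * d ^ 2 := by gcongr; exact min_le_left _ _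
  have hpos : 0 < c₁ * η * d ^ 2 := by positivity
  simp only [hll] at hupper
  have hr' : -(c₁ * d) * (η * d) = -(c₁ * η * d ^ 2) := by ring
  linarith

/-- The quadratic function that is positive exactly inside the disc of radius `ρ` about `(a, b)`. -/
def discQ (a b ρ : ℝ) (z : ℝ × ℝ) : ℝ := ρ ^ 2 - (z.1 - a) ^ 2 - (z.2 - b) ^ 2

lemma continuous_discQ (a b ρ : ℝ) : Continuous (discQ a b ρ) := by
  unfold discQ; fun_prop

lemma isCompact_discQ_nonneg (a b ρ : ℝ) : IsCompact {z | 0 ≤ discQ a b ρ z} := by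
  refine (isCompact_Icc (a := (a - |ρ|, b - |ρ|)) (b := (a + |ρ|, b + |ρ|))).of_isClosed_subset
    (isClosed_le continuous_const (continuous_discQ a b ρ)) fun z hz => ?_
  simp only [discQ, mem_ofPred_eq] at hz
  have h1 : |z.1 - a| ≤ |ρ| := sq_le_sq.1 (by nlinarith [sq_nonneg (z.2 - b)])
  have h2 : |z.2 - b| ≤ |ρ| := sq_le_sq.1 (by nlinarith [sq_nonneg (z.1 - a)])
  rw [abs_le] at h1 h2
  exact ⟨⟨by simp only; linarith, by simp only; linarith⟩,
    ⟨by simp only; linarith, by simp only; linarith⟩⟩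

/-- A `C²` function cannot have vanishing Hessian determinant outside a disc and Hessian
determinant bounded below by a positive multiple of the defining function inside it, while
`φxx > 0`. -/
lemma HasJet.false_of_disc {φ φx φy φxx φxy φyy G : ℝ × ℝ → ℝ} {Ω : Set (ℝ × ℝ)}
    (hφ : HasJet φ φx φy φxx φxy φyy Ω) (hΩ : IsOpen Ω) {a b ρ : ℝ} (hρ : 0 < ρ)
    (hsub : ∀ z, 0 ≤ discQ a b ρ z → z ∈ Ω) (hpos : ∀ z, 0 ≤ discQ a b ρ z → 0 < φxx z)
    (hout : ∀ z ∈ Ω, discQ a b ρ z ≤ 0 → φxx z * φyy z - φxy z ^ 2 = 0)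
    (hG : ContinuousOn G Ω) (hG0 : ∀ z, discQ a b ρ z = 0 → 0 < G z)
    (hin : ∀ z ∈ Ω, 0 < discQ a b ρ z →
      discQ a b ρ z * G z ≤ φxx z * φyy z - φxy z ^ 2) : False := by
  obtain ⟨⟨x₀, y₀⟩, hq0, hmin⟩ := (isCompact_discQ_nonneg a b ρ).exists_isMinOn
    ⟨(a, b), by simp [discQ, sq_nonneg]⟩
    (f := φx) (fun z hz => (hφ.gradx z (hsub z hz)).continuousAt.continuousWithinAt)
  simp only [mem_ofPred_eq] at hq0
  have hqΩ := hsub _ hq0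
  have hqpos := hpos _ hq0
  set p₀ := φx (x₀, y₀) with hp₀
  -- moving left inside the disc decreases `φx`
  have hleft : ∀ x y t : ℝ, 0 < t → (∀ s ∈ Icc (x - t) x, 0 ≤ discQ a b ρ (s, y)) →
      p₀ < φx (x, y) := by
    intro x y t ht hs
    have hmono : StrictMonoOn (fun s => φx (s, y)) (Icc (x - t) x) := by
      refine strictMonoOn_of_hasDerivWithinAt_pos (f' := fun s => φxx (s, y)) (convex_Icc _ _)
        (fun s h => (hφ.gradx _ (hsub _ (hs s h))).hasDerivAt_fst.continuousAt.continuousWithinAt)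
        (fun s h =>
          (hφ.gradx _ (hsub _ (hs s (interior_subset h)))).hasDerivAt_fst.hasDerivWithinAt)
        fun s h => hpos _ (hs s (interior_subset h))
    have h1 := hmono (left_mem_Icc.2 (by linarith)) (right_mem_Icc.2 (by linarith))
      (show x - t < x by linarith)
    have h2 : p₀ ≤ φx (x - t, y) := hmin (hs (x - t) (left_mem_Icc.2 (by linarith)))
    exact h2.trans_lt h1
  have hlt : ∀ z, 0 < discQ a b ρ z → p₀ < φx z := by
    rintro ⟨x, y⟩ hz
    have hc : Continuous fun s => discQ a b ρ (s, y) :=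
      (continuous_discQ a b ρ).comp (by fun_prop)
    obtain ⟨t, ht, hts⟩ := Metric.eventually_nhds_iff.1
      (hc.continuousAt.eventually (lt_mem_nhds hz))
    refine hleft x y (t / 2) (by positivity) fun s hs => (hts ?_).le
    rw [Real.dist_eq, abs_lt]
    constructor <;> linarith [hs.1, hs.2]
  have hQq : discQ a b ρ (x₀, y₀) = 0 :=
    le_antisymm (not_lt.1 fun h => (hlt _ h).ne rfl) hq0
  have hxa : x₀ ≤ a := by
    by_contra! hxa
    refine (hleft x₀ y₀ (x₀ - a) (by linarith) fun s hs => ?_).ne rfl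
    simp only [discQ] at hQq ⊢
    nlinarith [hs.1, hs.2]
  obtain ⟨χ, hχ0, hχ⟩ := hφ.exists_partial_inverse hΩ hqΩ hqpos
  rw [← hp₀] at hχ0 hχ
  have hχc : ContinuousAt (fun w : ℝ × ℝ => (χ w, w.2)) (p₀, y₀) :=
    hχ.self_of_nhds.2.2.2.continuousAt.prodMk continuousAt_snd
  have hχt : Tendsto (fun w : ℝ × ℝ => (χ w, w.2)) (𝓝 (p₀, y₀)) (𝓝 (x₀, y₀)) := by
    simpa only [ContinuousAt, hχ0] using hχc
  have hGq := hG0 _ hQq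
  have hΩn := hΩ.mem_nhds hqΩ
  have hGn := hχt.eventually ((hG.continuousAt hΩn).eventually
    (lt_mem_nhds (half_lt_self hGq)))
  have hxxc : ContinuousAt (fun w => φxx (χ w, w.2)) (p₀, y₀) := by
    have := hφ.contxx.continuousAt hΩn
    exact Tendsto.comp (by simpa only [hχ0, ContinuousAt] using this) hχt
  have hxn := hχt.eventually ((hφ.contxx.continuousAt hΩn).eventually
    (gt_mem_nhds (show φxx (x₀, y₀) < 2 * φxx (x₀, y₀) by linarith)))
  obtain ⟨r, hr, hball⟩ := Metric.eventually_nhds_iff_ball.1 (hχ.and (hGn.and hxn))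
  have hbox : ∀ p ∈ Icc (p₀ - r / 2) (p₀ + r / 2), ∀ y ∈ Icc (y₀ - r / 2) (y₀ + r / 2),
      (p, y) ∈ ball (p₀, y₀) r := by
    intro p hp y hy
    rw [mem_ball, Prod.dist_eq, max_lt_iff, Real.dist_eq, Real.dist_eq, abs_lt, abs_lt]
    exact ⟨⟨by linarith [hp.1], by linarith [hp.2]⟩, ⟨by linarith [hy.1], by linarith [hy.2]⟩⟩
  refine legendre_contradiction (H := fun w => w.1 * χ w - φ (χ w, w.2)) (χ := χ)
    (ψ := fun w => - φy (χ w, w.2)) (m := fun w => 1 / φxx (χ w, w.2))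
    (n := fun w => -φxy (χ w, w.2) / φxx (χ w, w.2))
    (h := fun w => -((φxx (χ w, w.2) * φyy (χ w, w.2) - φxy (χ w, w.2) ^ 2) / φxx (χ w, w.2)))
    (p₀ := p₀) (y₀ := y₀) (r := r / 2) (a := a) (b := b) (ρ := ρ)
    (c := G (x₀, y₀) / (4 * φxx (x₀, y₀)))
    (by positivity) (by positivity) ?_ ?_ ?_ ?_ ?_ ?_ ?_ ?_ ?_ hρ (by rwa [hχ0])
  · intro p hp y hy
    obtain ⟨⟨h1, h2, h3, h4⟩, -⟩ := hball _ (hbox p hp y hy)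
    have := ((HasGrad.fst (p, y)).mul h4).sub ((hφ.grad _ h1).comp_graph h4)
    rw [h3] at this
    convert this using 1 <;> simp <;> ring
  · intro p hp y hy
    exact (hball _ (hbox p hp y hy)).1.2.2.2
  · intro p hp y hy
    obtain ⟨⟨h1, h2, h3, h4⟩, -⟩ := hball _ (hbox p hp y hy)
    convert ((hφ.grady _ h1).comp_graph h4).neg using 1
    · simp only [smul_eq_mul]
      ring
    · simp only [smul_eq_mul] at h2 ⊢
      field_simp
      ring
  · exact continuousAt_const.div hxxc (by simpa only [hχ0] using hqpos.ne')
  · simpa only [hχ0] using one_div_pos.2 hqpos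
  · intro p hp y hy hpp
    obtain ⟨⟨h1, h2, h3, h4⟩, -⟩ := hball _ (hbox p hp y hy)
    by_contra! hcon
    have := hlt (χ (p, y), y) hcon
    rw [h3] at this
    exact absurd hpp (not_le.2 this)
  · intro p hp y hy hQ
    obtain ⟨⟨h1, h2, h3, h4⟩, -⟩ := hball _ (hbox p hp y hy)
    have := hout _ h1 hQ
    simp only at this ⊢
    rw [this, zero_div, neg_zero]
  · intro p hp y hy hQ
    obtain ⟨⟨h1, h2, h3, h4⟩, h5, h6⟩ := hball _ (hbox p hp y hy)
    have := hin _ h1 hQ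
    simp only [discQ] at this h2 h5 h6 ⊢
    rw [neg_le_neg_iff, le_div_iff₀ h2]
    refine le_trans ?_ this
    have h7 : G (x₀, y₀) / (4 * φxx (x₀, y₀)) * φxx (χ (p, y), y) ≤ G (χ (p, y), y) := by
      rw [div_mul_eq_mul_div, div_le_iff₀ (by positivity)]
      nlinarith
    calc _ = (ρ ^ 2 - (χ (p, y) - a) ^ 2 - (y - b) ^ 2) *
          (G (x₀, y₀) / (4 * φxx (x₀, y₀)) * φxx (χ (p, y), y)) := by ring
      _ ≤ _ := by gcongr
  · simpa only [hχ0, discQ] using hQq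

abbrev E3 := EuclideanSpace ℝ (Fin 3)

lemma HasGrad.congr_of_eventuallyEq {V : Type*} [NormedAddCommGroup V] [NormedSpace ℝ V]
    {f g : ℝ × ℝ → V} {a b : V} {z : ℝ × ℝ} (hf : HasGrad f a b z) (h : g =ᶠ[𝓝 z] f) :
    HasGrad g a b z := HasFDerivAt.congr_of_eventuallyEq hf h

lemma HasGrad.add {V : Type*} [NormedAddCommGroup V] [NormedSpace ℝ V]
    {f g : ℝ × ℝ → V} {a b c d : V} {z : ℝ × ℝ} (hf : HasGrad f a b z)
    (hg : HasGrad g c d z) : HasGrad (fun w => f w + g w) (a + c) (b + d) z := by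
  refine HasFDerivAt.hasGrad (HasFDerivAt.add hf hg) ?_ ?_ <;> simp

lemma HasGrad.const {V : Type*} [NormedAddCommGroup V] [NormedSpace ℝ V] (v : V) (z : ℝ × ℝ) :
    HasGrad (fun _ => v) 0 0 z :=
  (hasFDerivAt_const v z).hasGrad (by simp) (by simp)

lemma HasGrad.const_mul {f : ℝ × ℝ → ℝ} {a b : ℝ} {z : ℝ × ℝ} (c : ℝ) (hf : HasGrad f a b z) :
    HasGrad (fun w => c * f w) (c * a) (c * b) z := by
  refine HasFDerivAt.hasGrad (HasFDerivAt.const_mul hf c) ?_ ?_ <;> simp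

section Inner

variable {V : Type*} [NormedAddCommGroup V] [InnerProductSpace ℝ V]

lemma HasGrad.inner {f g : ℝ × ℝ → V} {a b c d : V} {z : ℝ × ℝ} (hf : HasGrad f a b z)
    (hg : HasGrad g c d z) : HasGrad (fun w => ⟪f w, g w⟫_ℝ) (⟪f z, c⟫_ℝ + ⟪a, g z⟫_ℝ)
      (⟪f z, d⟫_ℝ + ⟪b, g z⟫_ℝ) z := by
  refine HasFDerivAt.hasGrad (HasFDerivAt.inner ℝ hf hg) ?_ ?_ <;> simp

lemma HasGrad.inner_of_eq_zero {f c : ℝ × ℝ → V} {a b : V} {z : ℝ × ℝ} (hf : HasGrad f a b z)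
    (h0 : f z = 0) (hc : ContinuousAt c z) :
    HasGrad (fun w => ⟪f w, c w⟫_ℝ) ⟪a, c z⟫_ℝ ⟪b, c z⟫_ℝ z := by
  have h1 : HasGrad (fun w => ⟪f w, c w - c z⟫_ℝ) 0 0 z := by
    refine HasFDerivAt.hasGrad (L := 0) ?_ (by simp) (by simp)
    refine HasFDerivAt.of_isLittleO ?_
    have hO := HasFDerivAt.isBigO_sub hf
    have ho : (fun w => c w - c z) =o[𝓝 z] (fun _ => (1 : ℝ)) := by
      rw [Asymptotics.isLittleO_one_iff]
      exact tendsto_sub_nhds_zero_iff.2 hc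
    simp only [h0, sub_zero, inner_zero_left, _root_.zero_apply] at hO ⊢
    have h2 : (fun w => ⟪f w, c w - c z⟫_ℝ) =O[𝓝 z] fun w => ‖f w‖ * ‖c w - c z‖ :=
      Asymptotics.IsBigO.of_bound 1 (Eventually.of_forall fun w => by
        simpa using norm_inner_le_norm (𝕜 := ℝ) (f w) (c w - c z))
    refine h2.trans_isLittleO ?_
    have := hO.norm_norm.mul_isLittleO ho.norm_left
    refine Asymptotics.isLittleO_norm_right.1 ?_
    simpa using this
  have h2 := hf.inner (HasGrad.const (c z) z)
  have := h2.add h1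
  simp only [inner_zero_right, zero_add, add_zero] at this
  refine this.congr_of_eventuallyEq (Eventually.of_forall fun w => ?_)
  simp [inner_sub_right]

/-- First and second order consequences of `U` being conformal with factor `l`. -/
lemma conformal_first {U X Y Uxx Uxy Uyy : ℝ × ℝ → V} {l lx ly lxx lxy lyy : ℝ × ℝ → ℝ}
    {Ω : Set (ℝ × ℝ)} (hΩ : IsOpen Ω) (hU : HasJet U X Y Uxx Uxy Uyy Ω)
    (hl : HasJet l lx ly lxx lxy lyy Ω) (hXX : ∀ z ∈ Ω, ⟪X z, X z⟫_ℝ = l z)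
    (hYY : ∀ z ∈ Ω, ⟪Y z, Y z⟫_ℝ = l z) (hXY : ∀ z ∈ Ω, ⟪X z, Y z⟫_ℝ = 0) {z : ℝ × ℝ}
    (hz : z ∈ Ω) :
    ⟪X z, Uxx z⟫_ℝ = lx z / 2 ∧ ⟪Y z, Uxx z⟫_ℝ = - ly z / 2 ∧
    ⟪X z, Uxy z⟫_ℝ = ly z / 2 ∧ ⟪Y z, Uxy z⟫_ℝ = lx z / 2 ∧
    ⟪X z, Uyy z⟫_ℝ = - lx z / 2 ∧ ⟪Y z, Uyy z⟫_ℝ = ly z / 2 := by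
  have hn := hΩ.mem_nhds hz
  obtain ⟨h1, h2⟩ := ((hU.gradx z hz).inner (hU.gradx z hz)).unique
    ((hl.grad z hz).congr_of_eventuallyEq (by filter_upwards [hn] with w hw using hXX w hw))
  obtain ⟨h3, h4⟩ := ((hU.grady z hz).inner (hU.grady z hz)).unique
    ((hl.grad z hz).congr_of_eventuallyEq (by filter_upwards [hn] with w hw using hYY w hw))
  obtain ⟨h5, h6⟩ := ((hU.gradx z hz).inner (hU.grady z hz)).unique
    ((HasGrad.const (0 : ℝ) z).congr_of_eventuallyEq
      (by filter_upwards [hn] with w hw using hXY w hw))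
  simp only [real_inner_comm (X z), real_inner_comm (Y z)] at *
  refine ⟨?_, ?_, ?_, ?_, ?_, ?_⟩ <;> linarith

/-- Gauss equation for a conformal `C²` immersion. -/
lemma conformal_gauss {U X Y Uxx Uxy Uyy : ℝ × ℝ → V} {l lx ly lxx lxy lyy : ℝ × ℝ → ℝ}
    {Ω : Set (ℝ × ℝ)} (hΩ : IsOpen Ω) (hU : HasJet U X Y Uxx Uxy Uyy Ω)
    (hl : HasJet l lx ly lxx lxy lyy Ω) (hXX : ∀ z ∈ Ω, ⟪X z, X z⟫_ℝ = l z)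
    (hYY : ∀ z ∈ Ω, ⟪Y z, Y z⟫_ℝ = l z) (hXY : ∀ z ∈ Ω, ⟪X z, Y z⟫_ℝ = 0) {z : ℝ × ℝ}
    (hz : z ∈ Ω) :
    ⟪Uxx z, Uyy z⟫_ℝ - ⟪Uxy z, Uxy z⟫_ℝ = -(lxx z + lyy z) / 2 := by
  have hn := hΩ.mem_nhds hz
  have hX0 : HasGrad (fun w => X w - X z) (Uxx z) (Uxy z) z := by
    simpa using (hU.gradx z hz).sub (HasGrad.const (X z) z)
  have hβ : ∀ᶠ w in 𝓝 z, HasGrad (fun w => ⟪X z, Y w⟫_ℝ) (⟪X z, Uxy w⟫_ℝ) (⟪X z, Uyy w⟫_ℝ) w := by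
    filter_upwards [hn] with w hw
    simpa using (HasGrad.const (X z) w).inner (hU.grady w hw)
  have hx := ((hl.grady z hz).const_mul (1 / 2)).sub
    (hX0.inner_of_eq_zero (sub_self _) (hU.contxy.continuousAt hn))
  have hy := ((hl.gradx z hz).const_mul (-1 / 2)).sub
    (hX0.inner_of_eq_zero (sub_self _) (hU.contyy.continuousAt hn))
  have := HasGrad.symmetric hβ (hx.congr_of_eventuallyEq ?_) (hy.congr_of_eventuallyEq ?_)
  · linarith
  · filter_upwards [hn] with w hw
    have := (conformal_first hΩ hU hl hXX hYY hXY hw).2.2.1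
    rw [inner_sub_left]
    linarith
  · filter_upwards [hn] with w hw
    have := (conformal_first hΩ hU hl hXX hYY hXY hw).2.2.2.2.1
    rw [inner_sub_left]
    linarith

end Inner

/-- The cross product on `E3`. -/
def cross (a b : E3) : E3 :=
  !₂[a 1 * b 2 - a 2 * b 1, a 2 * b 0 - a 0 * b 2, a 0 * b 1 - a 1 * b 0]

/-- The triple product `⟪v, a × b⟫`. -/
def tri (v a b : E3) : ℝ := ⟪v, cross a b⟫_ℝ

lemma inner_eq_sum (v w : E3) : ⟪v, w⟫_ℝ = v 0 * w 0 + v 1 * w 1 + v 2 * w 2 := by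
  simp [PiLp.inner_apply, Fin.sum_univ_three, mul_comm]

lemma tri_eq (v a b : E3) : tri v a b = v 0 * (a 1 * b 2 - a 2 * b 1) +
    v 1 * (a 2 * b 0 - a 0 * b 2) + v 2 * (a 0 * b 1 - a 1 * b 0) := by
  simp [tri, inner_eq_sum, cross]

lemma tri_swap (v a b : E3) : tri v b a = - tri v a b := by
  simp only [tri_eq]; ring

/-- Binet–Cauchy for a conformal frame. -/
lemma tri_mul_tri {X Y : E3} {l : ℝ} (hXX : ⟪X, X⟫_ℝ = l) (hYY : ⟪Y, Y⟫_ℝ = l)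
    (hXY : ⟪X, Y⟫_ℝ = 0) (v w : E3) :
    tri v X Y * tri w X Y =
      l ^ 2 * ⟪v, w⟫_ℝ - l * (⟪X, v⟫_ℝ * ⟪X, w⟫_ℝ + ⟪Y, v⟫_ℝ * ⟪Y, w⟫_ℝ) := by
  have key : tri v X Y * tri w X Y =
      ⟪X, X⟫_ℝ * ⟪Y, Y⟫_ℝ * ⟪v, w⟫_ℝ - ⟪X, Y⟫_ℝ * ⟪X, Y⟫_ℝ * ⟪v, w⟫_ℝ
      + ⟪X, Y⟫_ℝ * (⟪X, v⟫_ℝ * ⟪Y, w⟫_ℝ + ⟪Y, v⟫_ℝ * ⟪X, w⟫_ℝ)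
      - (⟪Y, Y⟫_ℝ * (⟪X, v⟫_ℝ * ⟪X, w⟫_ℝ) + ⟪X, X⟫_ℝ * (⟪Y, v⟫_ℝ * ⟪Y, w⟫_ℝ)) := by
    simp only [tri_eq, inner_eq_sum]
    ring
  rw [key, hXX, hYY, hXY]
  ring

lemma ContinuousOn.tri {f X Y : ℝ × ℝ → E3} {s : Set (ℝ × ℝ)} (hf : ContinuousOn f s)
    (hX : ContinuousOn X s) (hY : ContinuousOn Y s) :
    ContinuousOn (fun w => _root_.tri (f w) (X w) (Y w)) s := by
  simp only [tri_eq]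
  fun_prop

lemma HasJet.continuousOn {V : Type*} [NormedAddCommGroup V] [NormedSpace ℝ V]
    {f fx fy fxx fxy fyy : ℝ × ℝ → V} {Ω : Set (ℝ × ℝ)} (h : HasJet f fx fy fxx fxy fyy Ω) :
    ContinuousOn f Ω ∧ ContinuousOn fx Ω ∧ ContinuousOn fy Ω :=
  ⟨fun z hz => (h.grad z hz).continuousAt.continuousWithinAt,
    fun z hz => (h.gradx z hz).continuousAt.continuousWithinAt,
    fun z hz => (h.grady z hz).continuousAt.continuousWithinAt⟩

/-- A `C²` immersion `U` of `Ω` in `ℝ³` inducing the conformal metric `l (dx² + dy²)`. -/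
structure IsConformal (U X Y Uxx Uxy Uyy : ℝ × ℝ → E3) (l lx ly lxx lxy lyy : ℝ × ℝ → ℝ)
    (Ω : Set (ℝ × ℝ)) : Prop where
  isOpen : IsOpen Ω
  jet : HasJet U X Y Uxx Uxy Uyy Ω
  jetl : HasJet l lx ly lxx lxy lyy Ω
  pos : ∀ z ∈ Ω, 0 < l z
  XX : ∀ z ∈ Ω, ⟪X z, X z⟫_ℝ = l z
  YY : ∀ z ∈ Ω, ⟪Y z, Y z⟫_ℝ = l z
  XY : ∀ z ∈ Ω, ⟪X z, Y z⟫_ℝ = 0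

namespace IsConformal

variable {U X Y Uxx Uxy Uyy : ℝ × ℝ → E3} {l lx ly lxx lxy lyy : ℝ × ℝ → ℝ} {Ω : Set (ℝ × ℝ)}

lemma comp_swap (h : IsConformal U X Y Uxx Uxy Uyy l lx ly lxx lxy lyy Ω) :
    IsConformal (U ∘ Prod.swap) (Y ∘ Prod.swap) (X ∘ Prod.swap) (Uyy ∘ Prod.swap)
      (Uxy ∘ Prod.swap) (Uxx ∘ Prod.swap) (l ∘ Prod.swap) (ly ∘ Prod.swap) (lx ∘ Prod.swap)
      (lyy ∘ Prod.swap) (lxy ∘ Prod.swap) (lxx ∘ Prod.swap) (Prod.swap ⁻¹' Ω) where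
  isOpen := h.isOpen.preimage continuous_swap
  jet := h.jet.comp_swap
  jetl := h.jetl.comp_swap
  pos _ hz := h.pos _ hz
  XX _ hz := h.YY _ hz
  YY _ hz := h.XX _ hz
  XY _ hz := (real_inner_comm _ _).trans (h.XY _ hz)

lemma mono (h : IsConformal U X Y Uxx Uxy Uyy l lx ly lxx lxy lyy Ω) {W : Set (ℝ × ℝ)}
    (hW : IsOpen W) (hWΩ : W ⊆ Ω) : IsConformal U X Y Uxx Uxy Uyy l lx ly lxx lxy lyy W where
  isOpen := hW
  jet := h.jet.mono hWΩ
  jetl := h.jetl.mono hWΩ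
  pos z hz := h.pos z (hWΩ hz)
  XX z hz := h.XX z (hWΩ hz)
  YY z hz := h.YY z (hWΩ hz)
  XY z hz := h.XY z (hWΩ hz)

lemma first (h : IsConformal U X Y Uxx Uxy Uyy l lx ly lxx lxy lyy Ω) {z : ℝ × ℝ} (hz : z ∈ Ω) :
    ⟪X z, Uxx z⟫_ℝ = lx z / 2 ∧ ⟪Y z, Uxx z⟫_ℝ = - ly z / 2 ∧
    ⟪X z, Uxy z⟫_ℝ = ly z / 2 ∧ ⟪Y z, Uxy z⟫_ℝ = lx z / 2 ∧
    ⟪X z, Uyy z⟫_ℝ = - lx z / 2 ∧ ⟪Y z, Uyy z⟫_ℝ = ly z / 2 :=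
  conformal_first h.isOpen h.jet h.jetl h.XX h.YY h.XY hz

lemma det_eq (h : IsConformal U X Y Uxx Uxy Uyy l lx ly lxx lxy lyy Ω) {z : ℝ × ℝ} (hz : z ∈ Ω) :
    tri (Uxx z) (X z) (Y z) * tri (Uyy z) (X z) (Y z) - tri (Uxy z) (X z) (Y z) ^ 2 =
      - l z ^ 2 * (lxx z + lyy z) / 2 + l z * (lx z ^ 2 + ly z ^ 2) / 2 := by
  have hb := tri_mul_tri (h.XX z hz) (h.YY z hz) (h.XY z hz)
  have hg := conformal_gauss h.isOpen h.jet h.jetl h.XX h.YY h.XY hz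
  obtain ⟨h1, h2, h3, h4, h5, h6⟩ := h.first hz
  rw [sq (tri _ _ _), hb, hb, h1, h2, h3, h4, h5, h6]
  linear_combination l z ^ 2 * hg

/-- Decomposition of the second derivatives of `⟪U, ν⟫` into tangential and normal parts. -/
lemma hessian_eq (h : IsConformal U X Y Uxx Uxy Uyy l lx ly lxx lxy lyy Ω) {z : ℝ × ℝ}
    (hz : z ∈ Ω) (ν : E3) :
    l z ^ 2 * ⟪Uxx z, ν⟫_ℝ = l z * ((lx z * ⟪X z, ν⟫_ℝ - ly z * ⟪Y z, ν⟫_ℝ) / 2) +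
      tri (Uxx z) (X z) (Y z) * tri ν (X z) (Y z) ∧
    l z ^ 2 * ⟪Uxy z, ν⟫_ℝ = l z * ((ly z * ⟪X z, ν⟫_ℝ + lx z * ⟪Y z, ν⟫_ℝ) / 2) +
      tri (Uxy z) (X z) (Y z) * tri ν (X z) (Y z) ∧
    l z ^ 2 * ⟪Uyy z, ν⟫_ℝ = l z * ((-lx z * ⟪X z, ν⟫_ℝ + ly z * ⟪Y z, ν⟫_ℝ) / 2) +
      tri (Uyy z) (X z) (Y z) * tri ν (X z) (Y z) := by
  have hb := tri_mul_tri (h.XX z hz) (h.YY z hz) (h.XY z hz)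
  obtain ⟨h1, h2, h3, h4, h5, h6⟩ := h.first hz
  rw [hb, hb, hb, h1, h2, h3, h4, h5, h6]
  refine ⟨?_, ?_, ?_⟩ <;> ring

lemma eq_zero_of_tri (h : IsConformal U X Y Uxx Uxy Uyy l lx ly lxx lxy lyy Ω) {z : ℝ × ℝ}
    (hz : z ∈ Ω) {v : E3} (hX : ⟪X z, v⟫_ℝ = 0) (hY : ⟪Y z, v⟫_ℝ = 0)
    (hv : tri v (X z) (Y z) = 0) : v = 0 := by
  have hb := tri_mul_tri (h.XX z hz) (h.YY z hz) (h.XY z hz) v v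
  rw [hX, hY, hv] at hb
  have := h.pos z hz
  have h2 : l z ^ 2 * ⟪v, v⟫_ℝ = 0 := by linarith
  rcases mul_eq_zero.1 h2 with h3 | h3
  · exact absurd h3 (by positivity)
  · exact inner_self_eq_zero.1 h3

end IsConformal

lemma HasJet.inner_const {U X Y Uxx Uxy Uyy : ℝ × ℝ → E3} {Ω : Set (ℝ × ℝ)}
    (h : HasJet U X Y Uxx Uxy Uyy Ω) (ν : E3) :
    HasJet (fun z => ⟪U z, ν⟫_ℝ) (fun z => ⟪X z, ν⟫_ℝ) (fun z => ⟪Y z, ν⟫_ℝ)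
      (fun z => ⟪Uxx z, ν⟫_ℝ) (fun z => ⟪Uxy z, ν⟫_ℝ) (fun z => ⟪Uyy z, ν⟫_ℝ) Ω where
  grad z hz := by simpa using (h.grad z hz).inner (HasGrad.const ν z)
  gradx z hz := by simpa using (h.gradx z hz).inner (HasGrad.const ν z)
  grady z hz := by simpa using (h.grady z hz).inner (HasGrad.const ν z)
  contxx := h.contxx.inner continuousOn_const
  contxy := h.contxy.inner continuousOn_const
  contyy := h.contyy.inner continuousOn_const

/-- Every neighbourhood of `z` contains a disc on whose boundary `l` has positive curvature of
first order in the defining function, and outside of which `l` is locally constant. -/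
def HasTestDiscs (lx ly lxx lyy : ℝ × ℝ → ℝ) (z : ℝ × ℝ) : Prop :=
  ∀ N ∈ 𝓝 z, ∃ (a b ρ : ℝ) (W : Set (ℝ × ℝ)) (A B C : ℝ × ℝ → ℝ), 0 < ρ ∧ IsOpen W ∧ W ⊆ N ∧
    (∀ w, 0 ≤ discQ a b ρ w → w ∈ W) ∧ Continuous A ∧ Continuous B ∧ Continuous C ∧
    (∀ w, discQ a b ρ w = 0 → 0 < C w) ∧
    ∀ w ∈ W, lx w = max (discQ a b ρ w) 0 ^ 2 * A w ∧ ly w = max (discQ a b ρ w) 0 ^ 2 * B w ∧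
      lxx w + lyy w = - (max (discQ a b ρ w) 0 * C w)

lemma HasTestDiscs.comp_swap {lx ly lxx lyy : ℝ × ℝ → ℝ} {z : ℝ × ℝ}
    (h : HasTestDiscs lx ly lxx lyy z) :
    HasTestDiscs (ly ∘ Prod.swap) (lx ∘ Prod.swap) (lyy ∘ Prod.swap) (lxx ∘ Prod.swap) z.swap := by
  intro N hN
  obtain ⟨a, b, ρ, W, A, B, C, hρ, hW, hWN, hQW, hA, hB, hC, hCpos, hl⟩ := h (Prod.swap ⁻¹' N)
    (continuous_swap.continuousAt.preimage_mem_nhds hN)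
  have hQ : ∀ w : ℝ × ℝ, discQ b a ρ w = discQ a b ρ w.swap := fun w => by
    simp [discQ]; ring
  refine ⟨b, a, ρ, Prod.swap ⁻¹' W, B ∘ Prod.swap, A ∘ Prod.swap, C ∘ Prod.swap, hρ,
    hW.preimage continuous_swap, fun w hw => by simpa using hWN hw,
    fun w hw => hQW _ (by rwa [← hQ]), hB.comp continuous_swap, hA.comp continuous_swap,
    hC.comp continuous_swap, fun w hw => hCpos _ (by rwa [← hQ]), fun w hw => ?_⟩
  obtain ⟨h1, h2, h3⟩ := hl _ hw
  simp only [hQ, Function.comp]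
  exact ⟨h2, h1, by rw [add_comm]; exact h3⟩

/-- The quotient of the Hessian determinant of `⟪U, ν⟫` by the defining function of a test
disc. -/
def hessianFactor (l σ M A B C px py l11 l12 l22 : ℝ) : ℝ :=
  (σ ^ 2 * (l ^ 2 * C / 2 + l * M ^ 3 * (A ^ 2 + B ^ 2) / 2) +
    l * σ * M * ((A * px - B * py) / 2 * (l22 - l11) - (B * px + A * py) * l12) -
    l ^ 2 * M ^ 3 * (((A * px - B * py) / 2) ^ 2 + ((B * px + A * py) / 2) ^ 2)) / l ^ 4

lemma hessianFactor_spec {l σ M A B C px py l11 l12 l22 f11 f12 f22 : ℝ} (hl : 0 < l)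
    (h11 : l ^ 2 * f11 = l * ((M ^ 2 * A * px - M ^ 2 * B * py) / 2) + l11 * σ)
    (h12 : l ^ 2 * f12 = l * ((M ^ 2 * B * px + M ^ 2 * A * py) / 2) + l12 * σ)
    (h22 : l ^ 2 * f22 = l * ((-(M ^ 2 * A) * px + M ^ 2 * B * py) / 2) + l22 * σ)
    (hdet : l11 * l22 - l12 ^ 2 = - l ^ 2 * -(M * C) / 2 +
      l * ((M ^ 2 * A) ^ 2 + (M ^ 2 * B) ^ 2) / 2) :
    f11 * f22 - f12 ^ 2 = M * hessianFactor l σ M A B C px py l11 l12 l22 := by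
  have h : l ^ 4 * (f11 * f22 - f12 ^ 2) =
      (l ^ 2 * f11) * (l ^ 2 * f22) - (l ^ 2 * f12) ^ 2 := by ring
  rw [h11, h12, h22] at h
  rw [hessianFactor, mul_div_assoc', eq_div_iff (by positivity), mul_comm, h]
  linear_combination σ ^ 2 * hdet

lemma hessianFactor_pos {l σ A B C px py l11 l12 l22 : ℝ} (hl : 0 < l) (hσ : σ ≠ 0) (hC : 0 < C) :
    0 < hessianFactor l σ 0 A B C px py l11 l12 l22 := by
  have h : hessianFactor l σ 0 A B C px py l11 l12 l22 = σ ^ 2 * (l ^ 2 * C / 2) / l ^ 4 := by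
    simp only [hessianFactor]
    ring
  rw [h]
  positivity

lemma ContinuousOn.hessianFactor {l σ M A B C px py l11 l12 l22 : ℝ × ℝ → ℝ} {W : Set (ℝ × ℝ)}
    (hl : ContinuousOn l W) (hl0 : ∀ w ∈ W, l w ≠ 0) (hσ : ContinuousOn σ W)
    (hM : ContinuousOn M W) (hA : ContinuousOn A W) (hB : ContinuousOn B W)
    (hC : ContinuousOn C W) (hpx : ContinuousOn px W) (hpy : ContinuousOn py W)
    (h11 : ContinuousOn l11 W) (h12 : ContinuousOn l12 W) (h22 : ContinuousOn l22 W) :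
    ContinuousOn (fun w => _root_.hessianFactor (l w) (σ w) (M w) (A w) (B w) (C w) (px w) (py w)
      (l11 w) (l12 w) (l22 w)) W := by
  refine ContinuousOn.div ?_ (hl.pow 4) fun w hw => pow_ne_zero 4 (hl0 w hw)
  fun_prop

namespace IsConformal

variable {U X Y Uxx Uxy Uyy : ℝ × ℝ → E3} {l lx ly lxx lxy lyy : ℝ × ℝ → ℝ} {Ω : Set (ℝ × ℝ)}

lemma tri_xx_eq_zero (h : IsConformal U X Y Uxx Uxy Uyy l lx ly lxx lxy lyy Ω) {z : ℝ × ℝ}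
    (hz : z ∈ Ω) (ht : HasTestDiscs lx ly lxx lyy z) : tri (Uxx z) (X z) (Y z) = 0 := by
  by_contra hne
  have hn := h.isOpen.mem_nhds hz
  set s := tri (Uxx z) (X z) (Y z) with hs
  set ν := s • cross (X z) (Y z) with hν
  have hφz : 0 < ⟪Uxx z, ν⟫_ℝ := by
    rw [hν, inner_smul_right]
    exact mul_self_pos.2 hne
  have hcl := h.jetl.continuousOn.1
  obtain ⟨-, hcX, hcY⟩ := h.jet.continuousOn
  have hσc : ContinuousOn (fun w => tri ν (X w) (Y w)) Ω := continuousOn_const.tri hcX hcY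
  have hσz : tri ν (X z) (Y z) ≠ 0 := by
    have h1 := tri_mul_tri (h.XX z hz) (h.YY z hz) (h.XY z hz) (Uxx z) ν
    have hX : ⟪X z, ν⟫_ℝ = 0 := by
      rw [hν, inner_smul_right]
      change s * tri (X z) (X z) (Y z) = 0
      rw [tri_eq]
      ring
    have hY : ⟪Y z, ν⟫_ℝ = 0 := by
      rw [hν, inner_smul_right]
      change s * tri (Y z) (X z) (Y z) = 0
      rw [tri_eq]
      ring
    intro h0
    rw [h0, hX, hY] at h1
    have := h.pos z hz
    have : 0 < l z ^ 2 * ⟪Uxx z, ν⟫_ℝ := by positivity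
    linarith
  have hjet := h.jet.inner_const ν
  have hN : ∀ᶠ w in 𝓝 z, w ∈ Ω ∧ 0 < ⟪Uxx w, ν⟫_ℝ ∧ tri ν (X w) (Y w) ≠ 0 :=
    (h.isOpen.eventually_mem hz).and (((hjet.contxx.continuousAt hn).eventually
      (lt_mem_nhds hφz)).and ((hσc.continuousAt hn).eventually_ne hσz))
  obtain ⟨a, b, ρ, W, A, B, C, hρ, hW, hWN, hQW, hA, hB, hC, hCpos, hl⟩ := ht _ hN
  replace hWN : ∀ w ∈ W, w ∈ Ω ∧ 0 < ⟪Uxx w, ν⟫_ℝ ∧ tri ν (X w) (Y w) ≠ 0 := fun w hw => hWN hw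
  have hWΩ : W ⊆ Ω := fun w hw => (hWN w hw).1
  have hM : Continuous fun w => max (discQ a b ρ w) 0 :=
    (continuous_discQ a b ρ).max continuous_const
  replace hcl := hcl.mono hWΩ
  replace hcX := hcX.mono hWΩ
  replace hcY := hcY.mono hWΩ
  have hk : ∀ w ∈ W, ⟪Uxx w, ν⟫_ℝ * ⟪Uyy w, ν⟫_ℝ - ⟪Uxy w, ν⟫_ℝ ^ 2 =
      max (discQ a b ρ w) 0 * hessianFactor (l w) (tri ν (X w) (Y w)) (max (discQ a b ρ w) 0)
        (A w) (B w) (C w) ⟪X w, ν⟫_ℝ ⟪Y w, ν⟫_ℝ (tri (Uxx w) (X w) (Y w))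
        (tri (Uxy w) (X w) (Y w)) (tri (Uyy w) (X w) (Y w)) := by
    intro w hw
    obtain ⟨h1, h2, h3⟩ := hl w hw
    obtain ⟨e1, e2, e3⟩ := h.hessian_eq (hWΩ hw) ν
    have e4 := h.det_eq (hWΩ hw)
    rw [h3, h1, h2] at e4
    rw [h1, h2] at e1 e2 e3
    exact hessianFactor_spec (h.pos w (hWΩ hw)) e1 e2 e3 e4
  refine (hjet.mono hWΩ).false_of_disc hW hρ hQW (fun w hw => (hWN w (hQW w hw)).2.1) ?_
    (ContinuousOn.hessianFactor hcl (fun w hw => (h.pos w (hWΩ hw)).ne') (hσc.mono hWΩ)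
      hM.continuousOn hA.continuousOn hB.continuousOn hC.continuousOn
      (hcX.inner (continuousOn_const (c := ν))) (hcY.inner (continuousOn_const (c := ν)))
      ((h.jet.contxx.mono hWΩ).tri hcX hcY) ((h.jet.contxy.mono hWΩ).tri hcX hcY)
      ((h.jet.contyy.mono hWΩ).tri hcX hcY)) ?_ ?_
  · intro w hw hQ
    rw [hk w hw, max_eq_right hQ, zero_mul]
  · intro w hw
    have hwW := hQW w hw.ge
    rw [hw, max_self]
    exact hessianFactor_pos (h.pos w (hWΩ hwW)) (hWN w hwW).2.2 (hCpos w hw)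
  · intro w hw hQ
    rw [hk w hw, max_eq_left hQ.le]

lemma tri_yy_eq_zero (h : IsConformal U X Y Uxx Uxy Uyy l lx ly lxx lxy lyy Ω) {z : ℝ × ℝ}
    (hz : z ∈ Ω) (ht : HasTestDiscs lx ly lxx lyy z) : tri (Uyy z) (X z) (Y z) = 0 := by
  have := h.comp_swap.tri_xx_eq_zero (z := z.swap) (by simpa using hz) ht.comp_swap
  simpa [tri_swap _ (X z)] using this

lemma second_eq_zero (h : IsConformal U X Y Uxx Uxy Uyy l lx ly lxx lxy lyy Ω) {z : ℝ × ℝ}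
    (hz : z ∈ Ω) (ht : HasTestDiscs lx ly lxx lyy z) (hx : lx z = 0) (hy : ly z = 0)
    (hΔ : lxx z + lyy z = 0) : Uxx z = 0 ∧ Uxy z = 0 ∧ Uyy z = 0 := by
  have hxx := h.tri_xx_eq_zero hz ht
  have hyy := h.tri_yy_eq_zero hz ht
  have hd := h.det_eq hz
  have hxy : tri (Uxy z) (X z) (Y z) = 0 := by
    rw [hxx, hx, hy, hΔ] at hd
    exact pow_eq_zero_iff two_ne_zero |>.1 (by linarith)
  obtain ⟨h1, h2, h3, h4, h5, h6⟩ := h.first hz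
  rw [hx] at h1 h4 h5
  rw [hy] at h2 h3 h6
  norm_num at h1 h2 h3 h4 h5 h6
  exact ⟨h.eq_zero_of_tri hz h1 h2 hxx, h.eq_zero_of_tri hz h3 h4 hxy,
    h.eq_zero_of_tri hz h5 h6 hyy⟩

end IsConformal

namespace IsConformal

variable {U X Y Uxx Uxy Uyy : ℝ × ℝ → E3} {l lx ly lxx lxy lyy : ℝ × ℝ → ℝ} {Ω : Set (ℝ × ℝ)}

lemma false_of_target (h : IsConformal U X Y Uxx Uxy Uyy l lx ly lxx lxy lyy Ω) {a b ρ : ℝ}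
    (hρ : 0 < ρ) (hsub : ∀ w, 0 ≤ discQ a b ρ w → w ∈ Ω)
    (hbd : ∀ w, discQ a b ρ w = 0 → Uxx w = 0 ∧ Uxy w = 0)
    (hdiam : ∀ t ∈ Ioo (a - ρ) (a + ρ), ly (t, b) = 0 ∧ lxx (t, b) + lyy (t, b) < 0)
    (hn : ∀ w ∈ Ω, ∀ w' ∈ Ω, 0 < tri (cross (X w) (Y w)) (X w') (Y w')) : False := by
  have hX : X (a + ρ, b) = X (a - ρ, b) := by
    have hc : ∀ θ, discQ a b ρ (a + ρ * Real.cos θ, b + ρ * Real.sin θ) = 0 := fun θ => by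
      simp only [discQ]
      linear_combination ρ ^ 2 * (-(Real.sin_sq_add_cos_sq θ))
    have hd : ∀ θ, HasDerivAt (fun θ => X (a + ρ * Real.cos θ, b + ρ * Real.sin θ)) 0 θ := by
      intro θ
      have := (h.jet.gradx _ (hsub _ (hc θ).ge)).hasDerivAt_comp
        (((Real.hasDerivAt_cos θ).const_mul ρ).const_add a)
        (((Real.hasDerivAt_sin θ).const_mul ρ).const_add b)
      simpa [(hbd _ (hc θ)).1, (hbd _ (hc θ)).2] using this
    have := is_const_of_deriv_eq_zero (fun θ => (hd θ).differentiableAt) (fun θ => (hd θ).deriv)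
      0 Real.pi
    simpa [← sub_eq_add_neg] using this
  have hseg : ∀ t ∈ Icc (a - ρ) (a + ρ), (t, b) ∈ Ω := fun t ht => hsub _ (by
    simp only [discQ]
    nlinarith [ht.1, ht.2])
  have hleft : (a - ρ, b) ∈ Ω := hseg _ ⟨le_rfl, by linarith⟩
  set ν := cross (X (a - ρ, b)) (Y (a - ρ, b)) with hν
  have hνX : ⟪X (a - ρ, b), ν⟫_ℝ = 0 := by
    change tri _ _ _ = 0
    rw [tri_eq]
    ring
  have hd : ∀ t ∈ Icc (a - ρ) (a + ρ), HasDerivAt (fun t => ⟪X (t, b), ν⟫_ℝ / √(l (t, b)))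
      ((⟪Uxx (t, b), ν⟫_ℝ * √(l (t, b)) - ⟪X (t, b), ν⟫_ℝ * (lx (t, b) / (2 * √(l (t, b))))) /
        √(l (t, b)) ^ 2) t := fun t ht => by
    have hpos := h.pos _ (hseg t ht)
    exact ((h.jet.inner_const ν).gradx _ (hseg t ht)).hasDerivAt_fst.fun_div
      ((h.jetl.grad _ (hseg t ht)).hasDerivAt_fst.sqrt hpos.ne') (Real.sqrt_pos.2 hpos).ne'
  obtain ⟨t, ht, h0⟩ := exists_hasDerivAt_eq_zero (show a - ρ < a + ρ by linarith)
    (fun t ht => (hd t ht).continuousAt.continuousWithinAt)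
    (by rw [hX, hνX]; simp) (fun t ht => hd t (Ioo_subset_Icc_self ht))
  have htΩ := hseg t (Ioo_subset_Icc_self ht)
  have hpos := h.pos _ htΩ
  have hsq := Real.sqrt_pos.2 hpos
  obtain ⟨hly, hΔ⟩ := hdiam t ht
  have h1 := (h.hessian_eq htΩ ν).1
  rw [hly, zero_mul, sub_zero] at h1
  rw [div_eq_zero_iff, or_iff_left (by positivity)] at h0
  have h2 : l (t, b) * ⟪Uxx (t, b), ν⟫_ℝ = ⟪X (t, b), ν⟫_ℝ * lx (t, b) / 2 := by
    have hss := Real.mul_self_sqrt hpos.le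
    field_simp at h0
    have h3 : ⟪Uxx (t, b), ν⟫_ℝ * √(l (t, b)) ^ 2 * 2 = ⟪X (t, b), ν⟫_ℝ * lx (t, b) := by linarith
    rw [sq, hss] at h3
    linarith
  have h4 : tri (Uxx (t, b)) (X (t, b)) (Y (t, b)) * tri ν (X (t, b)) (Y (t, b)) = 0 := by
    linear_combination l (t, b) * h2 - h1
  have h5 := (mul_eq_zero.1 h4).resolve_right (hn _ hleft _ htΩ).ne'
  have h6 := h.det_eq htΩ
  rw [h5, hly] at h6
  have h7 : 0 < l (t, b) ^ 2 * -(lxx (t, b) + lyy (t, b)) := mul_pos (by positivity) (by linarith)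
  have h8 : 0 ≤ l (t, b) * lx (t, b) ^ 2 := by positivity
  nlinarith [sq_nonneg (tri (Uxy (t, b)) (X (t, b)) (Y (t, b)))]

end IsConformal

lemma hasDerivAt_max_zero_pow (n : ℕ) (t : ℝ) :
    HasDerivAt (fun t : ℝ => max t 0 ^ (n + 2)) ((n + 2) * max t 0 ^ (n + 1)) t := by
  rcases lt_trichotomy t 0 with h | h | h
  · have : (fun t : ℝ => max t 0 ^ (n + 2)) =ᶠ[𝓝 t] fun _ => 0 := by
      filter_upwards [gt_mem_nhds h] with s hs
      simp [max_eq_right hs.le]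
    rw [max_eq_right h.le, zero_pow (by omega), mul_zero]
    exact (hasDerivAt_const t (0 : ℝ)).congr_of_eventuallyEq this
  · subst h
    rw [max_self, zero_pow (by omega), mul_zero]
    refine HasDerivAt.of_isLittleO ?_
    simp only [max_self, sub_zero, smul_zero, ne_eq, Nat.add_eq_zero_iff, OfNat.ofNat_ne_zero,
      and_false, not_false_eq_true, zero_pow]
    refine Asymptotics.IsBigO.trans_isLittleO (g := fun t : ℝ => t ^ (n + 2)) ?_
      (by simpa using Asymptotics.isLittleO_pow_pow (𝕜 := ℝ) (show 1 < n + 2 by omega))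
    refine Asymptotics.IsBigO.of_bound 1 (Eventually.of_forall fun s => ?_)
    rw [norm_pow, norm_pow, one_mul]
    gcongr
    rw [Real.norm_eq_abs, Real.norm_eq_abs, abs_of_nonneg (le_max_right _ _)]
    exact max_le (le_abs_self s) (abs_nonneg s)
  · have : (fun t : ℝ => max t 0 ^ (n + 2)) =ᶠ[𝓝 t] fun t => t ^ (n + 2) := by
      filter_upwards [lt_mem_nhds h] with s hs
      simp [max_eq_left hs.le]
    rw [max_eq_left h.le]
    have h2 := (hasDerivAt_pow (n + 2) t).congr_of_eventuallyEq this
    simpa using h2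

lemma HasGrad.snd (z : ℝ × ℝ) : HasGrad Prod.snd (0 : ℝ) 1 z :=
  hasFDerivAt_snd.hasGrad (by simp) (by simp)

lemma hasGrad_discQ (a b ρ : ℝ) (z : ℝ × ℝ) :
    HasGrad (discQ a b ρ) (-2 * (z.1 - a)) (-2 * (z.2 - b)) z := by
  have hx := (HasGrad.fst z).sub (HasGrad.const a z)
  have hy := (HasGrad.snd z).sub (HasGrad.const b z)
  have := ((HasGrad.const (ρ ^ 2) z).sub (hx.mul hx)).sub (hy.mul hy)
  have he : discQ a b ρ = fun w => ρ ^ 2 - (w.1 - a) * (w.1 - a) - (w.2 - b) * (w.2 - b) := by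
    ext w
    simp only [discQ]
    ring
  rw [he]
  convert this using 1 <;> ring

lemma hasGrad_discQ_pow (a b ρ : ℝ) (n : ℕ) (z : ℝ × ℝ) :
    HasGrad (fun w => max (discQ a b ρ w) 0 ^ (n + 2))
      ((n + 2) * max (discQ a b ρ z) 0 ^ (n + 1) * (-2 * (z.1 - a)))
      ((n + 2) * max (discQ a b ρ z) 0 ^ (n + 1) * (-2 * (z.2 - b))) z := by
  refine HasFDerivAt.hasGrad
    ((hasDerivAt_max_zero_pow n (discQ a b ρ z)).comp_hasFDerivAt z (hasGrad_discQ a b ρ z)) ?_ ?_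
    <;> simp

section Bump

variable (a b ρ : ℝ) (z : ℝ × ℝ)

/-- A `C^{2,1}` function supported in the disc of radius `ρ` about `(a, b)`. -/
def bump : ℝ := -(max (discQ a b ρ z) 0 ^ 3 * (ρ ^ 2 + 10 * (z.2 - b) ^ 2))

def bumpA : ℝ := 6 * (z.1 - a) * (ρ ^ 2 + 10 * (z.2 - b) ^ 2)

def bumpB : ℝ := 6 * (z.2 - b) * (ρ ^ 2 + 10 * (z.2 - b) ^ 2) -
  20 * max (discQ a b ρ z) 0 * (z.2 - b)

def bumpC : ℝ := 24 * ((z.1 - a) ^ 2 + (z.2 - b) ^ 2) * (ρ ^ 2 + 10 * (z.2 - b) ^ 2) -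
  12 * max (discQ a b ρ z) 0 * (ρ ^ 2 + 10 * (z.2 - b) ^ 2) -
  240 * max (discQ a b ρ z) 0 * (z.2 - b) ^ 2 + 20 * max (discQ a b ρ z) 0 ^ 2

def bumpXX : ℝ := max (discQ a b ρ z) 0 * (ρ ^ 2 + 10 * (z.2 - b) ^ 2) *
  (6 * max (discQ a b ρ z) 0 - 24 * (z.1 - a) ^ 2)

def bumpXY : ℝ := max (discQ a b ρ z) 0 * (z.1 - a) * (z.2 - b) *
  (120 * max (discQ a b ρ z) 0 - 24 * (ρ ^ 2 + 10 * (z.2 - b) ^ 2))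

def bumpYY : ℝ := max (discQ a b ρ z) 0 * (6 * max (discQ a b ρ z) 0 *
  (ρ ^ 2 + 10 * (z.2 - b) ^ 2) - 24 * (z.2 - b) ^ 2 * (ρ ^ 2 + 10 * (z.2 - b) ^ 2) +
  240 * max (discQ a b ρ z) 0 * (z.2 - b) ^ 2 - 20 * max (discQ a b ρ z) 0 ^ 2)

lemma bumpXX_add_bumpYY : bumpXX a b ρ z + bumpYY a b ρ z =
    -(max (discQ a b ρ z) 0 * bumpC a b ρ z) := by
  simp only [bumpXX, bumpYY, bumpC]
  ring

lemma continuous_bumpA : Continuous (bumpA a b ρ) := by unfold bumpA; fun_prop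

lemma continuous_bumpB : Continuous (bumpB a b ρ) := by
  have := continuous_discQ a b ρ
  unfold bumpB
  fun_prop

lemma continuous_bumpC : Continuous (bumpC a b ρ) := by
  have := continuous_discQ a b ρ
  unfold bumpC
  fun_prop

variable {a b ρ z}

lemma bumpC_pos_of_discQ_eq_zero (hρ : 0 < ρ) (h : discQ a b ρ z = 0) : 0 < bumpC a b ρ z := by
  have h1 : (z.1 - a) ^ 2 + (z.2 - b) ^ 2 = ρ ^ 2 := by
    simp only [discQ] at h
    linarith
  simp only [bumpC, h, max_self, h1]
  have : 0 < ρ ^ 2 * (ρ ^ 2 + 10 * (z.2 - b) ^ 2) := by positivity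
  linarith

lemma bumpC_pos_of_snd_eq (hρ : 0 < ρ) (h : 0 ≤ discQ a b ρ z) (hz : z.2 = b) :
    0 < bumpC a b ρ z := by
  have h1 : (z.1 - a) ^ 2 = ρ ^ 2 - discQ a b ρ z := by
    simp only [discQ, hz]
    ring
  simp only [bumpC, max_eq_left h, hz, h1]
  nlinarith [sq_nonneg (9 * ρ ^ 2 - 10 * discQ a b ρ z), pow_pos hρ 4]

variable (a b ρ)

lemma hasJet_bump : HasJet (bump a b ρ)
    (fun z => max (discQ a b ρ z) 0 ^ 2 * bumpA a b ρ z)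
    (fun z => max (discQ a b ρ z) 0 ^ 2 * bumpB a b ρ z)
    (bumpXX a b ρ) (bumpXY a b ρ) (bumpYY a b ρ) univ := by
  have hM := (continuous_discQ a b ρ).max continuous_const (g := fun _ => (0 : ℝ))
  have h2 := fun z => hasGrad_discQ_pow a b ρ 0 z
  have h3 := fun z => hasGrad_discQ_pow a b ρ 1 z
  have hx := fun z => (HasGrad.fst z).sub (HasGrad.const a z)
  have hy := fun z => (HasGrad.snd z).sub (HasGrad.const b z)
  have hS := fun z => (HasGrad.const (ρ ^ 2) z).add (((hy z).mul (hy z)).const_mul 10)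
  refine ⟨fun z _ => ?_, fun z _ => ?_, fun z _ => ?_, ?_, ?_, ?_⟩
  · convert ((h3 z).mul (hS z)).neg using 1
    · ext w; simp only [bump]; ring
    · simp only [bumpA]; push_cast; ring
    · simp only [bumpB]; push_cast; ring
  · convert ((h2 z).mul ((hx z).mul (hS z))).const_mul 6 using 1
    · ext w; simp only [bumpA]; ring
    · simp only [bumpXX]; push_cast; ring
    · simp only [bumpXY]; push_cast; ring
  · convert (((h2 z).mul ((hy z).mul (hS z))).const_mul 6).sub
      (((h3 z).mul (hy z)).const_mul 20) using 1
    · ext w; simp only [bumpB]; ring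
    · simp only [bumpXY]; push_cast; ring
    · simp only [bumpYY]; push_cast; ring
  · unfold bumpXX; fun_prop
  · unfold bumpXY; fun_prop
  · unfold bumpYY; fun_prop

end Bump

lemma HasJet.hasFDerivAt_fderiv {f fx fy fxx fxy fyy : ℝ × ℝ → ℝ}
    (h : HasJet f fx fy fxx fxy fyy univ) (z : ℝ × ℝ) :
    HasFDerivAt (fderiv ℝ f)
      (fxx z • (ContinuousLinearMap.fst ℝ ℝ ℝ).smulRight (ContinuousLinearMap.fst ℝ ℝ ℝ) +
        fxy z • ((ContinuousLinearMap.snd ℝ ℝ ℝ).smulRight (ContinuousLinearMap.fst ℝ ℝ ℝ) +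
          (ContinuousLinearMap.fst ℝ ℝ ℝ).smulRight (ContinuousLinearMap.snd ℝ ℝ ℝ)) +
        fyy z • (ContinuousLinearMap.snd ℝ ℝ ℝ).smulRight (ContinuousLinearMap.snd ℝ ℝ ℝ)) z := by
  have he : fderiv ℝ f = fun w => fx w • ContinuousLinearMap.fst ℝ ℝ ℝ +
      fy w • ContinuousLinearMap.snd ℝ ℝ ℝ := by
    ext1 w
    rw [HasFDerivAt.fderiv (h.grad w (mem_univ w))]
    ext <;> simp
  rw [he]
  refine ((HasFDerivAt.smul_const (h.gradx z (mem_univ z)) (ContinuousLinearMap.fst ℝ ℝ ℝ)).fun_add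
    (HasFDerivAt.smul_const (h.grady z (mem_univ z)) (ContinuousLinearMap.snd ℝ ℝ ℝ))).congr_fderiv
    ?_
  ext <;> simp

lemma HasJet.contDiff {f fx fy fxx fxy fyy : ℝ × ℝ → ℝ}
    (h : HasJet f fx fy fxx fxy fyy univ) : ContDiff ℝ 2 f := by
  have h1 := continuousOn_univ.1 h.contxx
  have h2 := continuousOn_univ.1 h.contxy
  have h3 := continuousOn_univ.1 h.contyy
  refine (contDiff_succ_iff_fderiv (n := 1)).2
    ⟨fun z => HasFDerivAt.differentiableAt (h.grad z (mem_univ z)), by simp, ?_⟩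
  refine contDiff_one_iff_fderiv.2 ⟨fun z => (h.hasFDerivAt_fderiv z).differentiableAt, ?_⟩
  rw [funext fun z => (h.hasFDerivAt_fderiv z).fderiv]
  fun_prop

lemma contDiff_bump (a b ρ : ℝ) : ContDiff ℝ 2 (bump a b ρ) := (hasJet_bump a b ρ).contDiff

lemma locallyLipschitz_bump_second {W : Type*} [NormedAddCommGroup W] [NormedSpace ℝ W]
    (a b ρ : ℝ) (S T R : W) :
    LocallyLipschitz fun z => bumpXX a b ρ z • S + bumpXY a b ρ z • T + bumpYY a b ρ z • R := by
  have hQ : LocallyLipschitz fun z => (max (discQ a b ρ z) 0, z) := by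
    have : ContDiff ℝ 1 (discQ a b ρ) := by unfold discQ; fun_prop
    exact (this.locallyLipschitz.max_const 0).prodMk LocallyLipschitz.id
  have hΦ : ContDiff ℝ 1 fun w : ℝ × (ℝ × ℝ) =>
      (w.1 * (ρ ^ 2 + 10 * (w.2.2 - b) ^ 2) * (6 * w.1 - 24 * (w.2.1 - a) ^ 2)) • S +
      (w.1 * (w.2.1 - a) * (w.2.2 - b) * (120 * w.1 - 24 * (ρ ^ 2 + 10 * (w.2.2 - b) ^ 2))) • T +
      (w.1 * (6 * w.1 * (ρ ^ 2 + 10 * (w.2.2 - b) ^ 2) -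
          24 * (w.2.2 - b) ^ 2 * (ρ ^ 2 + 10 * (w.2.2 - b) ^ 2) +
          240 * w.1 * (w.2.2 - b) ^ 2 - 20 * w.1 ^ 2)) • R := by
    fun_prop
  exact hΦ.locallyLipschitz.comp hQ

lemma locallyLipschitz_fderiv_fderiv_bump (a b ρ : ℝ) :
    LocallyLipschitz (fderiv ℝ (fderiv ℝ (bump a b ρ))) := by
  rw [funext fun z => ((hasJet_bump a b ρ).hasFDerivAt_fderiv z).fderiv]
  exact locallyLipschitz_bump_second (W := ℝ × ℝ →L[ℝ] ℝ × ℝ →L[ℝ] ℝ) a b ρ _ _ _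

lemma bump_eq_zero {a b ρ : ℝ} {z : ℝ × ℝ} (h : discQ a b ρ z ≤ 0) : bump a b ρ z = 0 := by
  simp [bump, max_eq_right h]

lemma hasCompactSupport_bump (a b ρ : ℝ) : HasCompactSupport (bump a b ρ) := by
  refine HasCompactSupport.intro (isCompact_discQ_nonneg a b ρ) fun z hz => bump_eq_zero ?_
  exact (not_le.1 hz).le

lemma dist_iteratedFDeriv_two {E F : Type*} [NormedAddCommGroup E] [NormedSpace ℝ E]
    [NormedAddCommGroup F] [NormedSpace ℝ F] (f : E → F) (x y : E) :
    dist (iteratedFDeriv ℝ 2 f x) (iteratedFDeriv ℝ 2 f y) =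
      dist (fderiv ℝ (fderiv ℝ f) x) (fderiv ℝ (fderiv ℝ f) y) := by
  rw [iteratedFDeriv_succ_eq_comp_right, iteratedFDeriv_succ_eq_comp_right, Function.comp_apply,
    Function.comp_apply, LinearIsometryEquiv.dist_map]
  simpa [iteratedFDerivWithin_univ, fderivWithin_univ] using
    dist_iteratedFDerivWithin_one (𝕜 := ℝ) (s := univ) (t := univ) (x := x) (y := y)
      (fderiv ℝ f) (fderiv ℝ f) uniqueDiffWithinAt_univ uniqueDiffWithinAt_univ

lemma locallyLipschitz_iteratedFDeriv_bump (a b ρ : ℝ) :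
    LocallyLipschitz (iteratedFDeriv ℝ 2 (bump a b ρ)) := by
  intro z
  obtain ⟨K, t, ht, h⟩ := locallyLipschitz_fderiv_fderiv_bump a b ρ z
  refine ⟨K, t, ht, LipschitzOnWith.of_dist_le_mul fun x hx y hy => ?_⟩
  rw [dist_iteratedFDeriv_two]
  exact h.dist_le_mul x hx y hy

lemma ContDiff.exists_norm_iteratedFDeriv_le {E : Type*} [NormedAddCommGroup E] [NormedSpace ℝ E]
    {f : E → ℝ} (hf : ContDiff ℝ 2 f) (hs : HasCompactSupport f) :
    ∃ M : ℝ, ∀ k : ℕ, (k : ℕ∞) ≤ 2 → ∀ x, ‖iteratedFDeriv ℝ k f x‖ ≤ M := by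
  have h (k : ℕ) : ∃ M : ℝ, (k : ℕ∞) ≤ 2 → ∀ x, ‖iteratedFDeriv ℝ k f x‖ ≤ M := by
    by_cases hk : (k : ℕ∞) ≤ 2
    · obtain ⟨M, hM⟩ := (hs.iteratedFDeriv (𝕜 := ℝ) k).exists_bound_of_continuous
        (hf.continuous_iteratedFDeriv (by exact_mod_cast hk))
      exact ⟨M, fun _ => hM⟩
    · exact ⟨0, fun h => absurd h hk⟩
  choose M hM using h
  refine ⟨max (M 0) (max (M 1) (M 2)), fun k hk x => (hM k hk x).trans ?_⟩
  have : k ≤ 2 := by exact_mod_cast hk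
  interval_cases k <;> simp

lemma exists_contDiff_tsum {E J : Type*} [NormedAddCommGroup E] [NormedSpace ℝ E] [Countable J]
    {f : J → E → ℝ} {K : Set E} (hf : ∀ j, ContDiff ℝ 2 (f j)) (hs : ∀ j, HasCompactSupport (f j))
    (hL : ∀ j, ∃ L, LipschitzOnWith L (iteratedFDeriv ℝ 2 (f j)) K) :
    ∃ κ : J → ℝ, (∀ j, 0 < κ j) ∧ ContDiff ℝ 2 (fun x => 1 + ∑' j, κ j * f j x) ∧
      (∃ L, LipschitzOnWith L (iteratedFDeriv ℝ 2 fun x => 1 + ∑' j, κ j * f j x) K) ∧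
      ∀ x, 0 < 1 + ∑' j, κ j * f j x := by
  have := Encodable.ofCountable J
  obtain ⟨ε, hε, c, hc, hc1⟩ := posSumOfEncodable (show (0 : ℝ) < 1 / 2 by norm_num) J
  choose M hM using fun j => (hf j).exists_norm_iteratedFDeriv_le (hs j)
  choose L hL using hL
  set D : J → ℝ := fun j => 1 + |M j| + L j with hD
  have hDpos (j) : 0 < D j := by positivity
  have hMD (j) : M j ≤ D j := by
    have := le_abs_self (M j)
    have := (L j).coe_nonneg
    simp only [hD]
    linarith
  have hLD (j) : L j ≤ D j := by
    simp only [hD]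
    have := abs_nonneg (M j)
    linarith
  set κ : J → ℝ := fun j => ε j / D j with hκ
  have hκpos (j) : 0 < κ j := div_pos (hε j) (hDpos j)
  have hκD (j) : κ j * D j = ε j := div_mul_cancel₀ _ (hDpos j).ne'
  have hit (k : ℕ) (hk : (k : ℕ∞) ≤ 2) (j : J) (x : E) :
      iteratedFDeriv ℝ k (fun x => κ j * f j x) x = κ j • iteratedFDeriv ℝ k (f j) x :=
    iteratedFDeriv_const_smul_apply' (a := κ j)
      ((hf j).of_le (by exact_mod_cast hk)).contDiffAt
  have hb (k : ℕ) (j : J) (x : E) (hk : (k : ℕ∞) ≤ 2) :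
      ‖iteratedFDeriv ℝ k (fun x => κ j * f j x) x‖ ≤ ε j := by
    rw [hit k hk, norm_smul, Real.norm_of_nonneg (hκpos j).le, ← hκD j]
    exact mul_le_mul_of_nonneg_left ((hM j k hk x).trans (hMD j)) (hκpos j).le
  have hcd (j) : ContDiff ℝ 2 fun x => κ j * f j x := contDiff_const.mul (hf j)
  have hsum := contDiff_tsum (N := 2) (v := fun _ => ε) hcd (fun _ _ => hc.summable) hb
  refine ⟨κ, hκpos, contDiff_const.add hsum, ⟨c.toNNReal, ?_⟩, fun x => ?_⟩
  · have hD2 : (iteratedFDeriv ℝ 2 fun x => 1 + ∑' j, κ j * f j x) =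
        fun x => ∑' j, κ j • iteratedFDeriv ℝ 2 (f j) x := by
      ext1 x
      have h1 := iteratedFDeriv_tsum (N := 2) (v := fun _ => ε) (k := 2) hcd
        (fun _ _ => hc.summable) hb le_rfl
      have h2 : iteratedFDeriv ℝ 2 (fun x => 1 + ∑' j, κ j * f j x) x =
          iteratedFDeriv ℝ 2 (fun x => ∑' j, κ j * f j x) x := by
        rw [fun_iteratedFDeriv_add_apply contDiff_const.contDiffAt hsum.contDiffAt,
          iteratedFDeriv_const_of_ne (by norm_num)]
        simp
      rw [h2, h1]
      exact tsum_congr fun j => hit 2 le_rfl j x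
    rw [hD2]
    refine LipschitzOnWith.of_dist_le_mul fun x hx y hy => ?_
    have hS (x : E) : Summable fun j => κ j • iteratedFDeriv ℝ 2 (f j) x := by
      refine Summable.of_norm_bounded hc.summable fun j => ?_
      rw [← hit 2 le_rfl]
      exact hb 2 j x le_rfl
    rw [dist_eq_norm, ← (hS x).tsum_sub (hS y), Real.coe_toNNReal _ (hc.nonneg fun j => (hε j).le)]
    refine tsum_of_norm_bounded (hc.mul_right (dist x y)) fun j => ?_
    rw [← smul_sub, norm_smul, Real.norm_of_nonneg (hκpos j).le, ← hκD j, mul_assoc, ← dist_eq_norm]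
    refine mul_le_mul_of_nonneg_left (((hL j).dist_le_mul x hx y hy).trans ?_) (hκpos j).le
    exact mul_le_mul_of_nonneg_right (hLD j) dist_nonneg
  · have : ‖∑' j, κ j * f j x‖ ≤ c := tsum_of_norm_bounded hc fun j => by
      simpa using hb 0 j x (by simp)
    have := (abs_le.1 this).1
    linarith

/-- The centre of the `k`-th disc of a sequence of discs that shrinks to the origin. -/
def targetCenter (k : ℕ) : E2 := EuclideanSpace.single 0 ((1 / 4 : ℝ) ^ k / 2)

def targetRadius (k : ℕ) : ℝ := (1 / 4 : ℝ) ^ k / 8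

lemma targetRadius_pos (k : ℕ) : 0 < targetRadius k := by unfold targetRadius; positivity

lemma targetRadius_add_lt_dist {i k : ℕ} (h : i ≠ k) :
    2 * targetRadius i + targetRadius k < dist (targetCenter i) (targetCenter k) := by
  have key (i k : ℕ) (h : i < k) : (1 / 4 : ℝ) ^ k ≤ (1 / 4) ^ i / 4 := by
    calc (1 / 4 : ℝ) ^ k ≤ (1 / 4) ^ (i + 1) :=
          pow_le_pow_of_le_one (by norm_num) (by norm_num) h
      _ = (1 / 4) ^ i / 4 := by ring
  have hi : (0 : ℝ) < (1 / 4) ^ i := by positivity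
  have hk : (0 : ℝ) < (1 / 4) ^ k := by positivity
  simp only [targetRadius, targetCenter, PiLp.dist_single_same, Real.dist_eq]
  rcases lt_or_gt_of_ne h with h | h
  · have := key i k h
    rw [lt_abs]
    left
    linarith
  · have := key k i h
    rw [lt_abs]
    right
    linarith

lemma disjoint_target_ball {i k : ℕ} (h : i ≠ k) :
    Disjoint (closedBall (targetCenter i) (2 * targetRadius i))
      (closedBall (targetCenter k) (targetRadius k)) :=
  closedBall_disjoint_closedBall (targetRadius_add_lt_dist h)

lemma exists_target_subset_ball {r : ℝ} (hr : 0 < r) :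
    ∃ k, closedBall (targetCenter k) (targetRadius k) ⊆ ball 0 r := by
  obtain ⟨k, hk⟩ := exists_pow_lt_of_lt_one hr (show (1 / 4 : ℝ) < 1 by norm_num)
  have hk0 : (0 : ℝ) < (1 / 4) ^ k := by positivity
  refine ⟨k, closedBall_subset_ball' ?_⟩
  rw [dist_zero_right, targetCenter, PiLp.norm_single, Real.norm_of_nonneg (by positivity),
    targetRadius]
  linarith

/-- Every point of the circle bounding a target disc is a limit of exterior points of the union of
all target discs. -/
lemma exists_ball_disjoint_target {k : ℕ} {z : E2}
    (hz : z ∈ sphere (targetCenter k) (targetRadius k)) {δ : ℝ} (hδ : 0 < δ) :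
    (ball z δ ∩ (closure (⋃ i, closedBall (targetCenter i) (targetRadius i)))ᶜ).Nonempty := by
  set p := targetCenter k
  set s := targetRadius k with hs
  have hspos : 0 < s := targetRadius_pos k
  have hzs : ‖z - p‖ = s := by rw [← dist_eq_norm]; exact hz
  set η : ℝ := min (1 / 2) (δ / (2 * s)) with hη
  have hη0 : 0 < η := by positivity
  have hη1 : η ≤ 1 / 2 := min_le_left _ _
  have hη2 : η * s < δ := by
    calc η * s ≤ δ / (2 * s) * s := mul_le_mul_of_nonneg_right (min_le_right _ _) hspos.le
      _ = δ / 2 := by field_simp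
      _ < δ := by linarith
  have hyp : ‖z + η • (z - p) - p‖ = (1 + η) * s := by
    rw [show z + η • (z - p) - p = (1 + η) • (z - p) by module, norm_smul, hzs,
      Real.norm_of_nonneg (by linarith)]
  refine ⟨z + η • (z - p), ?_, fun hcl => ?_⟩
  · rw [mem_ball, dist_eq_norm, add_sub_cancel_left, norm_smul, hzs, Real.norm_of_nonneg hη0.le]
    exact hη2
  · have hopen : IsOpen (ball p (2 * s) \ closedBall p s) := isOpen_ball.sdiff isClosed_closedBall
    obtain ⟨w, ⟨hw1, hw2⟩, hw3⟩ := mem_closure_iff.1 hcl _ hopen (by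
      rw [Set.mem_sdiff, mem_ball, mem_closedBall, dist_eq_norm, hyp]
      constructor <;> nlinarith)
    obtain ⟨i, hi⟩ := mem_iUnion.1 hw3
    rcases eq_or_ne k i with rfl | hki
    · exact hw2 hi
    · exact (disjoint_target_ball hki).le_bot ⟨ball_subset_closedBall hw1, hi⟩

/-- Pairwise disjoint discs such that arbitrarily close to the origin there is a disc whose bounding
circle is accumulated, at each of its points, by isolated discs of the family. -/
lemma exists_disc_configuration :
    ∃ (J : Type) (_ : Countable J) (c : J → E2) (ρ : J → ℝ), (∀ j, 0 < ρ j) ∧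
      (∀ i j, i ≠ j → Disjoint (closedBall (c i) (ρ i)) (closedBall (c j) (ρ j))) ∧
      ∀ r > 0, ∃ k, closedBall (c k) (ρ k) ⊆ ball 0 r ∧
        ∀ z ∈ sphere (c k) (ρ k), ∀ δ > 0, ∃ j, ∃ R > ρ j, closedBall (c j) R ⊆ ball z δ ∧
          ∀ i, i ≠ j → Disjoint (closedBall (c j) R) (closedBall (c i) (ρ i)) := by
  set F : Set E2 := closure (⋃ i, closedBall (targetCenter i) (targetRadius i)) with hF
  have hTF (k : ℕ) : closedBall (targetCenter k) (targetRadius k) ⊆ F :=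
    (subset_iUnion (fun i => closedBall (targetCenter i) (targetRadius i)) k).trans subset_closure
  have hFne : F.Nonempty := ⟨targetCenter 0, hTF 0 (mem_closedBall_self (targetRadius_pos 0).le)⟩
  have hpos : ∀ x ∈ Fᶜ, 0 < infDist x F / 3 := fun x hx => by
    have := (isClosed_closure.notMem_iff_infDist_pos hFne).1 hx
    positivity
  obtain ⟨t, r, htc, hts, htr, hμ, hdisj⟩ := Besicovitch.exists_disjoint_closedBall_covering_ae
    (MeasureTheory.volume : MeasureTheory.Measure E2) (fun _ => univ) Fᶜ
    (fun x _ δ hδ => ⟨δ / 2, mem_univ _, by constructor <;> linarith⟩)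
    (fun x => infDist x F / 3) hpos
  have hr0 (x : t) : 0 < r x := (htr x x.2).2.1
  have hr1 (x : t) : r x < infDist x.1 F / 3 := (htr x x.2).2.2
  have hxF (x : t) : Disjoint (closedBall x.1 (r x)) F := by
    rw [Set.disjoint_left]
    intro w hw hwF
    have h1 := infDist_le_dist_of_mem (x := x.1) hwF
    rw [mem_closedBall'] at hw
    linarith [hr1 x, hr0 x]
  set c : ℕ ⊕ t → E2 := Sum.elim targetCenter Subtype.val
  set ρ : ℕ ⊕ t → ℝ := Sum.elim targetRadius fun x => r x / 2
  have hiso (x : t) (i : ℕ ⊕ t) (hi : i ≠ Sum.inr x) :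
      Disjoint (closedBall x.1 (r x)) (closedBall (c i) (ρ i)) := by
    rcases i with k | y
    · exact (hxF x).mono_right (hTF k)
    · refine (hdisj x.2 y.2 fun h => hi (congrArg Sum.inr (Subtype.ext h.symm))).mono_right ?_
      exact closedBall_subset_closedBall (by simp only [ρ, Sum.elim_inr]; linarith [hr0 y])
  have hsub (x : t) : closedBall (c (Sum.inr x)) (ρ (Sum.inr x)) ⊆ closedBall x.1 (r x) :=
    closedBall_subset_closedBall (by simp only [ρ, Sum.elim_inr]; linarith [hr0 x])
  have := htc.to_subtype
  refine ⟨ℕ ⊕ t, inferInstance, c, ρ, ?_, ?_, fun r₀ hr₀ => ?_⟩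
  · rintro (k | x)
    · exact targetRadius_pos k
    · exact half_pos (hr0 x)
  · rintro i (k | x) hij
    · rcases i with l | y
      · refine (disjoint_target_ball fun h => hij (congrArg Sum.inl h)).mono_left ?_
        exact closedBall_subset_closedBall (by
          simp only [ρ, Sum.elim_inl]; linarith [targetRadius_pos l])
      · exact (hiso y (Sum.inl k) (by simp)).mono_left (hsub y)
    · exact ((hiso x i hij).mono_left (hsub x)).symm
  · obtain ⟨k, hk⟩ := exists_target_subset_ball hr₀
    refine ⟨Sum.inl k, hk, fun z hz δ hδ => ?_⟩
    have hzF : z ∈ F := hTF k (sphere_subset_closedBall hz)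
    have hne := exists_ball_disjoint_target hz (half_pos hδ)
    have hV : IsOpen (ball z (δ / 2) ∩ Fᶜ) := isOpen_ball.inter isClosed_closure.isOpen_compl
    have hnot : ¬ ball z (δ / 2) ∩ Fᶜ ⊆ Fᶜ \ ⋃ x ∈ t, closedBall x (r x) := fun h =>
      (hV.measure_pos MeasureTheory.volume hne).ne' (MeasureTheory.measure_mono_null h hμ)
    obtain ⟨y, ⟨hy1, hy2⟩, hy3⟩ := not_subset.1 hnot
    have hy4 : y ∈ ⋃ x ∈ t, closedBall x (r x) := by
      by_contra h
      exact hy3 ⟨hy2, h⟩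
    obtain ⟨x, hxt, hyx⟩ := mem_iUnion₂.1 hy4
    have h0 := hr0 ⟨x, hxt⟩
    have h1 := hr1 ⟨x, hxt⟩
    refine ⟨Sum.inr ⟨x, hxt⟩, r x, half_lt_self h0, closedBall_subset_ball' ?_,
      fun i hi => hiso ⟨x, hxt⟩ i hi⟩
    have h2 := infDist_le_dist_of_mem (x := x) hzF
    have h3 := dist_triangle x y z
    rw [mem_closedBall'] at hyx
    rw [mem_ball] at hy1
    simp only [c, Sum.elim_inr] at *
    linarith

/-- The coordinates of a point of the plane. -/
def planeEquiv : E2 ≃L[ℝ] ℝ × ℝ :=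
  (EuclideanSpace.equiv (Fin 2) ℝ).trans (ContinuousLinearEquiv.finTwoArrow ℝ ℝ)

lemma planeEquiv_apply (x : E2) : planeEquiv x = (x 0, x 1) := rfl

lemma planeEquiv_single_zero : planeEquiv (EuclideanSpace.single 0 1) = (1, 0) := by
  simp [planeEquiv_apply]

lemma planeEquiv_single_one : planeEquiv (EuclideanSpace.single 1 1) = (0, 1) := by
  simp [planeEquiv_apply]

lemma discQ_planeEquiv (c x : E2) (ρ : ℝ) :
    discQ (c 0) (c 1) ρ (planeEquiv x) = ρ ^ 2 - dist x c ^ 2 := by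
  rw [dist_eq_norm, EuclideanSpace.real_norm_sq_eq, Fin.sum_univ_two]
  simp only [discQ, planeEquiv_apply, PiLp.sub_apply]
  ring

lemma discQ_nonneg_iff {c : E2} {ρ : ℝ} (hρ : 0 < ρ) (w : ℝ × ℝ) :
    0 ≤ discQ (c 0) (c 1) ρ w ↔ planeEquiv.symm w ∈ closedBall c ρ := by
  rw [← planeEquiv.apply_symm_apply w, discQ_planeEquiv, planeEquiv.apply_symm_apply, sub_nonneg,
    sq_le_sq₀ dist_nonneg hρ.le, mem_closedBall]

lemma discQ_eq_zero_iff {c : E2} {ρ : ℝ} (hρ : 0 < ρ) (w : ℝ × ℝ) :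
    discQ (c 0) (c 1) ρ w = 0 ↔ planeEquiv.symm w ∈ sphere c ρ := by
  rw [← planeEquiv.apply_symm_apply w, discQ_planeEquiv, planeEquiv.apply_symm_apply, sub_eq_zero,
    sq_eq_sq₀ hρ.le dist_nonneg, mem_sphere, eq_comm]

/-- A positive `C^{2,1}` function `l` such that every neighbourhood of the origin contains a disc on
which `l` is a bump, and near each point of the circle bounding this disc there are further discs
in a neighbourhood of which `l` is a bump. -/
lemma exists_conformal_factor :
    ∃ l : ℝ × ℝ → ℝ, ContDiff ℝ 2 l ∧
      (∃ L, LipschitzOnWith L (iteratedFDeriv ℝ 2 l) (closedBall 0 1)) ∧ (∀ z, 0 < l z) ∧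
      ∀ N ∈ 𝓝 (0 : ℝ × ℝ), ∃ a b ρ κ, 0 < ρ ∧ 0 < κ ∧
        (∀ w, 0 ≤ discQ a b ρ w → w ∈ N ∧ l w = 1 + κ * bump a b ρ w) ∧
        ∀ z, discQ a b ρ z = 0 → ∀ N' ∈ 𝓝 z, ∃ a' b' ρ' κ', ∃ W : Set (ℝ × ℝ), 0 < ρ' ∧ 0 < κ' ∧
          IsOpen W ∧ W ⊆ N' ∧ (∀ w, 0 ≤ discQ a' b' ρ' w → w ∈ W) ∧
          ∀ w ∈ W, l w = 1 + κ' * bump a' b' ρ' w := by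
  obtain ⟨J, _, c, ρ, hρ, hdisj, hc⟩ := exists_disc_configuration
  obtain ⟨κ, hκ, hl, hL, hpos⟩ := exists_contDiff_tsum (K := closedBall (0 : ℝ × ℝ) 1)
    (fun j => contDiff_bump (c j 0) (c j 1) (ρ j)) (fun j => hasCompactSupport_bump _ _ _)
    (fun j => ((locallyLipschitz_iteratedFDeriv_bump (c j 0) (c j 1)
      (ρ j)).locallyLipschitzOn).exists_lipschitzOnWith_of_compact (isCompact_closedBall _ _))
  have hsum (k : J) (w : ℝ × ℝ)
      (h : ∀ i, i ≠ k → planeEquiv.symm w ∉ closedBall (c i) (ρ i)) :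
      1 + ∑' j, κ j * bump (c j 0) (c j 1) (ρ j) w =
        1 + κ k * bump (c k 0) (c k 1) (ρ k) w := by
    rw [tsum_eq_single k fun i hi => ?_]
    have := mt (discQ_nonneg_iff (hρ i) w).1 (h i hi)
    rw [bump_eq_zero (not_le.1 this).le, mul_zero]
  refine ⟨_, hl, hL, hpos, fun N hN => ?_⟩
  obtain ⟨r, hr, hrN⟩ := Metric.mem_nhds_iff.1
    (planeEquiv.continuous.continuousAt.preimage_mem_nhds (x := 0) (by simpa using hN))
  obtain ⟨k, hk, hz⟩ := hc r hr
  refine ⟨c k 0, c k 1, ρ k, κ k, hρ k, hκ k, fun w hw => ?_, fun z hzk N' hN' => ?_⟩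
  · rw [discQ_nonneg_iff (hρ k)] at hw
    refine ⟨by simpa using hrN (hk hw), hsum k w fun i hi hwi => ?_⟩
    exact (hdisj i k hi).le_bot ⟨hwi, hw⟩
  · obtain ⟨δ, hδ, hδN⟩ := Metric.mem_nhds_iff.1
      (planeEquiv.continuous.continuousAt.preimage_mem_nhds (x := planeEquiv.symm z)
        (by simpa using hN'))
    obtain ⟨j, R, hR, hsub, hj⟩ := hz _ ((discQ_eq_zero_iff (hρ k) z).1 hzk) δ hδ
    refine ⟨c j 0, c j 1, ρ j, κ j, planeEquiv.symm ⁻¹' ball (c j) R, hρ j, hκ j,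
      isOpen_ball.preimage planeEquiv.symm.continuous, fun w hw => ?_, fun w hw => ?_,
      fun w hw => hsum j w fun i hi hwi => ?_⟩
    · simpa using hδN (hsub (ball_subset_closedBall hw))
    · exact closedBall_subset_ball hR ((discQ_nonneg_iff (hρ j) w).1 hw)
    · exact (hj i hi).le_bot ⟨ball_subset_closedBall hw, hwi⟩

section Jet

variable {V : Type*} [NormedAddCommGroup V] [NormedSpace ℝ V]

lemma ContDiffOn.exists_hasJet {f : ℝ × ℝ → V} {Ω : Set (ℝ × ℝ)} (hf : ContDiffOn ℝ 2 f Ω)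
    (hΩ : IsOpen Ω) : ∃ fxx fxy fyy, HasJet f (fun z => fderiv ℝ f z (1, 0))
      (fun z => fderiv ℝ f z (0, 1)) fxx fxy fyy Ω := by
  have hgrad (z) (hz : z ∈ Ω) : HasGrad f (fderiv ℝ f z (1, 0)) (fderiv ℝ f z (0, 1)) z :=
    (((hf.differentiableOn (by norm_num)) z hz).differentiableAt
      (hΩ.mem_nhds hz)).hasFDerivAt.hasGrad rfl rfl
  have hd : ContDiffOn ℝ 1 (fderiv ℝ f) Ω := hf.fderiv_of_isOpen hΩ (by norm_num)
  have hdv (v : ℝ × ℝ) : ContDiffOn ℝ 1 (fun z => fderiv ℝ f z v) Ω :=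
    hd.clm_apply contDiffOn_const
  have hgv (v : ℝ × ℝ) (z) (hz : z ∈ Ω) : HasGrad (fun z => fderiv ℝ f z v)
      (fderiv ℝ (fun z => fderiv ℝ f z v) z (1, 0))
      (fderiv ℝ (fun z => fderiv ℝ f z v) z (0, 1)) z :=
    ((((hdv v).differentiableOn (by norm_num)) z hz).differentiableAt
      (hΩ.mem_nhds hz)).hasFDerivAt.hasGrad rfl rfl
  have hc (v w : ℝ × ℝ) :
      ContinuousOn (fun z => fderiv ℝ (fun z => fderiv ℝ f z v) z w) Ω :=
    ((hdv v).continuousOn_fderiv_of_isOpen hΩ le_rfl).clm_apply continuousOn_const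
  refine ⟨_, _, _, hgrad, hgv (1, 0), fun z hz => ?_, hc _ _, hc _ _, hc (0, 1) (0, 1)⟩
  rw [HasGrad.symmetric (by filter_upwards [hΩ.mem_nhds hz] with w hw using hgrad w hw)
    (hgv (1, 0) z hz) (hgv (0, 1) z hz)]
  exact hgv (0, 1) z hz

lemma HasJet.eqOn {f fx fy fxx fxy fyy g gx gy gxx gxy gyy : ℝ × ℝ → V} {Ω Ω' W : Set (ℝ × ℝ)}
    (hf : HasJet f fx fy fxx fxy fyy Ω) (hg : HasJet g gx gy gxx gxy gyy Ω') (hW : IsOpen W)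
    (hWΩ : W ⊆ Ω) (hWΩ' : W ⊆ Ω') (h : EqOn f g W) :
    EqOn fx gx W ∧ EqOn fy gy W ∧ EqOn fxx gxx W ∧ EqOn fyy gyy W := by
  have key {p q : ℝ × ℝ → V} {a b c d : V} {w : ℝ × ℝ} (hpq : EqOn p q W) (hw : w ∈ W)
      (hp : HasGrad p a b w) (hq : HasGrad q c d w) : a = c ∧ b = d :=
    hp.unique (hq.congr_of_eventuallyEq (hpq.eventuallyEq_of_mem (hW.mem_nhds hw)))
  have h1 (w) (hw : w ∈ W) := key h hw (hf.grad w (hWΩ hw)) (hg.grad w (hWΩ' hw))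
  have hx : EqOn fx gx W := fun w hw => (h1 w hw).1
  have hy : EqOn fy gy W := fun w hw => (h1 w hw).2
  exact ⟨hx, hy, fun w hw => (key hx hw (hf.gradx w (hWΩ hw)) (hg.gradx w (hWΩ' hw))).1,
    fun w hw => (key hy hw (hf.grady w (hWΩ hw)) (hg.grady w (hWΩ' hw))).2⟩

end Jet

lemma hasJet_one_add_bump (a b ρ κ : ℝ) : HasJet (fun z => 1 + κ * bump a b ρ z)
    (fun z => κ * (max (discQ a b ρ z) 0 ^ 2 * bumpA a b ρ z))
    (fun z => κ * (max (discQ a b ρ z) 0 ^ 2 * bumpB a b ρ z))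
    (fun z => κ * bumpXX a b ρ z) (fun z => κ * bumpXY a b ρ z) (fun z => κ * bumpYY a b ρ z)
    univ := by
  have h := hasJet_bump a b ρ
  refine ⟨fun z hz => ?_, fun z hz => (h.gradx z hz).const_mul κ,
    fun z hz => (h.grady z hz).const_mul κ, continuousOn_const.mul h.contxx,
    continuousOn_const.mul h.contxy, continuousOn_const.mul h.contyy⟩
  simpa using (HasGrad.const (1 : ℝ) z).add ((h.grad z hz).const_mul κ)

lemma mem_closure_discQ_pos {a b ρ : ℝ} (hρ : 0 < ρ) {z : ℝ × ℝ} (hz : discQ a b ρ z = 0) :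
    z ∈ closure {w | 0 < discQ a b ρ w} := by
  have hγ : Continuous fun t : ℝ => (a + t * (z.1 - a), b + t * (z.2 - b)) := by fun_prop
  have h1 : Tendsto (fun t : ℝ => (a + t * (z.1 - a), b + t * (z.2 - b))) (𝓝[<] 1) (𝓝 z) := by
    have := hγ.tendsto 1
    simp only [one_mul, add_sub_cancel] at this
    exact this.mono_left nhdsWithin_le_nhds
  refine mem_closure_of_tendsto h1 ?_
  filter_upwards [Ioo_mem_nhdsLT (show (0 : ℝ) < 1 by norm_num)] with t ht
  have : discQ a b ρ (a + t * (z.1 - a), b + t * (z.2 - b)) = ρ ^ 2 * (1 - t ^ 2) := by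
    simp only [discQ] at hz ⊢
    linear_combination t ^ 2 * hz
  rw [this]
  have := ht.1
  have := ht.2
  have : 0 < 1 - t ^ 2 := by nlinarith
  positivity

lemma tri_cross_self {X Y : E3} {l : ℝ} (hXX : ⟪X, X⟫_ℝ = l) (hYY : ⟪Y, Y⟫_ℝ = l)
    (hXY : ⟪X, Y⟫_ℝ = 0) : tri (cross X Y) X Y = l ^ 2 := by
  have : tri (cross X Y) X Y = ⟪X, X⟫_ℝ * ⟪Y, Y⟫_ℝ - ⟪X, Y⟫_ℝ ^ 2 := by
    rw [inner_eq_sum, inner_eq_sum, inner_eq_sum]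
    simp [tri_eq, cross]
    ring
  rw [this, hXX, hYY, hXY]
  ring

/-- Near a point, the normal direction of a conformal map varies by less than a right angle. -/
lemma IsConformal.exists_subset_tri_pos {U X Y Uxx Uxy Uyy : ℝ × ℝ → E3}
    {l lx ly lxx lxy lyy : ℝ × ℝ → ℝ} {Ω : Set (ℝ × ℝ)}
    (h : IsConformal U X Y Uxx Uxy Uyy l lx ly lxx lxy lyy Ω) {z : ℝ × ℝ} (hz : z ∈ Ω) :
    ∃ Ω' ⊆ Ω, IsOpen Ω' ∧ z ∈ Ω' ∧
      ∀ w ∈ Ω', ∀ w' ∈ Ω', 0 < tri (cross (X w) (Y w)) (X w') (Y w') := by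
  have hX := (h.jet.continuousOn.2.1).continuousAt (h.isOpen.mem_nhds hz)
  have hY := (h.jet.continuousOn.2.2).continuousAt (h.isOpen.mem_nhds hz)
  have hX1 : ContinuousAt (fun p : (ℝ × ℝ) × (ℝ × ℝ) => X p.1) (z, z) :=
    ContinuousAt.comp (g := X) hX continuousAt_fst
  have hX2 : ContinuousAt (fun p : (ℝ × ℝ) × (ℝ × ℝ) => X p.2) (z, z) :=
    ContinuousAt.comp (g := X) hX continuousAt_snd
  have hY1 : ContinuousAt (fun p : (ℝ × ℝ) × (ℝ × ℝ) => Y p.1) (z, z) :=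
    ContinuousAt.comp (g := Y) hY continuousAt_fst
  have hY2 : ContinuousAt (fun p : (ℝ × ℝ) × (ℝ × ℝ) => Y p.2) (z, z) :=
    ContinuousAt.comp (g := Y) hY continuousAt_snd
  have hc : ContinuousAt (fun p : (ℝ × ℝ) × (ℝ × ℝ) =>
      tri (cross (X p.1) (Y p.1)) (X p.2) (Y p.2)) (z, z) := by
    simp only [tri_eq, cross, Matrix.cons_val_zero, Matrix.cons_val_one,
      Matrix.cons_val]
    fun_prop
  have hpos : 0 < tri (cross (X z) (Y z)) (X z) (Y z) := by
    rw [tri_cross_self (h.XX z hz) (h.YY z hz) (h.XY z hz)]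
    exact pow_pos (h.pos z hz) 2
  have hev := hc.eventually (lt_mem_nhds hpos)
  rw [nhds_prod_eq] at hev
  obtain ⟨s, hs, hsp⟩ := mem_prod_same_iff.1 hev
  obtain ⟨t, hts, ht, hzt⟩ := _root_.mem_nhds_iff.1 (inter_mem hs (h.isOpen.mem_nhds hz))
  exact ⟨t, fun w hw => (hts hw).2, ht, hzt, fun w hw w' hw' =>
    hsp (mk_mem_prod (hts hw).1 (hts hw').1)⟩

lemma not_isConformal {l : ℝ × ℝ → ℝ}
    (hdisc : ∀ N ∈ 𝓝 (0 : ℝ × ℝ), ∃ a b ρ κ, 0 < ρ ∧ 0 < κ ∧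
      (∀ w, 0 ≤ discQ a b ρ w → w ∈ N ∧ l w = 1 + κ * bump a b ρ w) ∧
      ∀ z, discQ a b ρ z = 0 → ∀ N' ∈ 𝓝 z, ∃ a' b' ρ' κ', ∃ W : Set (ℝ × ℝ), 0 < ρ' ∧ 0 < κ' ∧
        IsOpen W ∧ W ⊆ N' ∧ (∀ w, 0 ≤ discQ a' b' ρ' w → w ∈ W) ∧
        ∀ w ∈ W, l w = 1 + κ' * bump a' b' ρ' w)
    {U X Y Uxx Uxy Uyy : ℝ × ℝ → E3} {lx ly lxx lxy lyy : ℝ × ℝ → ℝ} {Ω : Set (ℝ × ℝ)}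
    (hl : HasJet l lx ly lxx lxy lyy univ) (h0 : 0 ∈ Ω) :
    ¬ IsConformal U X Y Uxx Uxy Uyy l lx ly lxx lxy lyy Ω := by
  intro hΩ
  obtain ⟨Ω', hΩΩ', hΩ', h0', hn⟩ := hΩ.exists_subset_tri_pos h0
  have h := hΩ.mono hΩ' hΩΩ'
  obtain ⟨a, b, ρ, κ, hρ, hκ, hT, htest⟩ := hdisc Ω' (hΩ'.mem_nhds h0')
  obtain ⟨hx, hy, hxx, hyy⟩ := hl.eqOn (hasJet_one_add_bump a b ρ κ)
    (isOpen_lt continuous_const (continuous_discQ a b ρ)) (subset_univ _) (subset_univ _)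
    fun w hw => (hT w (le_of_lt hw)).2
  obtain ⟨-, hcx, hcy⟩ := hl.continuousOn
  obtain ⟨-, hbx, hby⟩ := (hasJet_one_add_bump a b ρ κ).continuousOn
  have hbj := hasJet_one_add_bump a b ρ κ
  simp only [continuousOn_univ] at hcx hcy hbx hby
  have hΔ : EqOn (fun w => lxx w + lyy w) (fun w => κ * bumpXX a b ρ w + κ * bumpYY a b ρ w)
      {w | 0 < discQ a b ρ w} := fun w hw => congrArg₂ (· + ·) (hxx hw) (hyy hw)
  refine h.false_of_target hρ (fun w hw => (hT w hw).1) (fun z hz => ?_) (fun t ht => ?_) hn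
  · have hcl := mem_closure_discQ_pos hρ hz
    have hlap := hΔ.closure
      ((continuousOn_univ.1 hl.contxx).add (continuousOn_univ.1 hl.contyy))
      ((continuousOn_univ.1 hbj.contxx).add (continuousOn_univ.1 hbj.contyy)) hcl
    have hlx := hx.closure hcx hbx hcl
    have hly := hy.closure hcy hby hcl
    have ht : HasTestDiscs lx ly lxx lyy z := by
      intro N' hN'
      obtain ⟨a', b', ρ', κ', W, hρ', hκ', hW, hWN, hQW, hWl⟩ := htest z hz N' hN'
      obtain ⟨hx', hy', hxx', hyy'⟩ := hl.eqOn (hasJet_one_add_bump a' b' ρ' κ') hW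
        (subset_univ _) (subset_univ _) hWl
      refine ⟨a', b', ρ', W, fun w => κ' * bumpA a' b' ρ' w, fun w => κ' * bumpB a' b' ρ' w,
        fun w => κ' * bumpC a' b' ρ' w, hρ', hW, hWN, hQW,
        continuous_const.mul (continuous_bumpA a' b' ρ'),
        continuous_const.mul (continuous_bumpB a' b' ρ'),
        continuous_const.mul (continuous_bumpC a' b' ρ'),
        fun w hw => mul_pos hκ' (bumpC_pos_of_discQ_eq_zero hρ' hw), fun w hw => ⟨?_, ?_, ?_⟩⟩
      · rw [hx' hw]; ring
      · rw [hy' hw]; ring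
      · rw [hxx' hw, hyy' hw, ← mul_add, bumpXX_add_bumpYY]; ring
    obtain ⟨h1, h2, -⟩ := h.second_eq_zero (hT z hz.ge).1 ht (by simp [hlx, hz]) (by simp [hly, hz])
      (by simpa [← mul_add, bumpXX_add_bumpYY, hz] using hlap)
    exact ⟨h1, h2⟩
  · have hQ : 0 < discQ a b ρ (t, b) := by
      simp only [discQ]
      nlinarith [ht.1, ht.2]
    refine ⟨by simp [hy hQ, bumpB], ?_⟩
    rw [hxx hQ, hyy hQ, ← mul_add, bumpXX_add_bumpYY, max_eq_left hQ.le]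
    have := mul_pos hκ (mul_pos hQ (bumpC_pos_of_snd_eq hρ hQ.le rfl))
    linarith

lemma lipschitzOnWith_iteratedFDeriv_comp {E F G H : Type*} [NormedAddCommGroup E]
    [NormedSpace ℝ E] [NormedAddCommGroup F] [NormedSpace ℝ F] [NormedAddCommGroup G]
    [NormedSpace ℝ G] [NormedAddCommGroup H] [NormedSpace ℝ H] {f : F → G} (hf : ContDiff ℝ 2 f)
    (A : E →L[ℝ] F) (B : G →L[ℝ] H) {s : Set E} {t : Set F} {L : NNReal}
    (hL : LipschitzOnWith L (iteratedFDeriv ℝ 2 f) t) (hst : MapsTo A s t) :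
    ∃ L', LipschitzOnWith L' (iteratedFDeriv ℝ 2 (B ∘ (f ∘ A))) s := by
  have he : iteratedFDeriv ℝ 2 (B ∘ (f ∘ A)) = fun x =>
      ContinuousLinearMap.compContinuousMultilinearMapL ℝ (fun _ : Fin 2 => E) G H B
        (ContinuousMultilinearMap.compContinuousLinearMapL (fun _ : Fin 2 => A)
          (iteratedFDeriv ℝ 2 f (A x))) := by
    ext1 x
    rw [B.iteratedFDeriv_comp_left (hf.comp A.contDiff).contDiffAt le_rfl,
      A.iteratedFDeriv_comp_right hf x le_rfl]
    rfl
  rw [he]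
  exact ⟨_, (ContinuousLinearMap.lipschitz _).comp_lipschitzOnWith
    ((ContinuousLinearMap.lipschitz _).comp_lipschitzOnWith
      (hL.comp A.lipschitz.lipschitzOnWith hst))⟩

lemma inner_fderiv_eq_of_jac (u : E2 → E3) (x : E2) (i j : Fin 2) :
    ⟪fderiv ℝ u x (EuclideanSpace.single i 1), fderiv ℝ u x (EuclideanSpace.single j 1)⟫_ℝ =
      ((Jac u x)ᵀ * Jac u x) i j := by
  simp [Jac, Matrix.mul_apply, inner_eq_sum, Fin.sum_univ_three]

lemma norm_planeEquiv_le (x : E2) : ‖planeEquiv x‖ ≤ ‖x‖ := by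
  rw [planeEquiv_apply, Prod.norm_mk]
  exact max_le (PiLp.norm_apply_le x 0) (PiLp.norm_apply_le x 1)

/-- **Pogorelov's counterexample (1972).** There exists a `C^{2,1}` Riemannian metric `g`
on the unit ball `B₁ ⊂ ℝ²` such that no neighborhood `B_r` of the origin admits a `C²`
isometric embedding of `(B_r, g)` into `ℝ³`. -/
theorem pogorelov_counterexample :
    ∃ g : E2 → Matrix (Fin 2) (Fin 2) ℝ,
      ContDiffOn ℝ 2 g (ball (0 : E2) 1) ∧
      (∃ L : NNReal, LipschitzOnWith L (fun x => iteratedFDeriv ℝ 2 g x) (ball (0 : E2) 1)) ∧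
      (∀ x ∈ ball (0 : E2) 1, (g x).IsSymm ∧ (g x).PosDef) ∧
      ∀ r : ℝ, 0 < r → r ≤ 1 →
        ¬ ∃ u : E2 → EuclideanSpace ℝ (Fin 3),
            ContDiffOn ℝ 2 u (ball (0 : E2) r) ∧
            Set.InjOn u (ball (0 : E2) r) ∧
            ∀ x ∈ ball (0 : E2) r, (Jac u x)ᵀ * Jac u x = g x := by
  obtain ⟨l, hl, ⟨L, hL⟩, hpos, hdisc⟩ := exists_conformal_factor
  set B : ℝ →L[ℝ] Matrix (Fin 2) (Fin 2) ℝ := (ContinuousLinearMap.id ℝ ℝ).smulRight 1 with hB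
  have hBapp (x : E2) : (B ∘ (l ∘ planeEquiv)) x = l (planeEquiv x) • 1 := rfl
  refine ⟨B ∘ (l ∘ planeEquiv), (B.contDiff.comp (hl.comp planeEquiv.contDiff)).contDiffOn,
    lipschitzOnWith_iteratedFDeriv_comp hl (planeEquiv : E2 →L[ℝ] ℝ × ℝ) B hL fun x hx => ?_,
    fun x _ => ⟨?_, ?_⟩, ?_⟩
  · rw [mem_ball_zero_iff] at hx
    rw [mem_closedBall_zero_iff]
    exact (norm_planeEquiv_le x).trans hx.le
  · rw [hBapp, Matrix.IsSymm, Matrix.transpose_smul, Matrix.transpose_one]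
  · rw [hBapp]
    exact Matrix.PosDef.one.smul (hpos _)
  · rintro r hr - ⟨u, hu, -, hg⟩
    set Ω : Set (ℝ × ℝ) := planeEquiv.symm ⁻¹' ball 0 r
    have hΩ : IsOpen Ω := isOpen_ball.preimage planeEquiv.symm.continuous
    have hU : ContDiffOn ℝ 2 (u ∘ planeEquiv.symm) Ω :=
      hu.comp planeEquiv.symm.contDiff.contDiffOn fun w hw => hw
    obtain ⟨Uxx, Uxy, Uyy, hjet⟩ := hU.exists_hasJet hΩ
    obtain ⟨lxx, lxy, lyy, hjetl⟩ := hl.contDiffOn.exists_hasJet isOpen_univ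
    have hfd (w) (v : E2) : fderiv ℝ (u ∘ planeEquiv.symm) w (planeEquiv v) =
        fderiv ℝ u (planeEquiv.symm w) v := by
      rw [planeEquiv.symm.comp_right_fderiv]
      simp
    have hinner (i j : Fin 2) (w) (hw : w ∈ Ω) :
        ⟪fderiv ℝ (u ∘ planeEquiv.symm) w (planeEquiv (EuclideanSpace.single i 1)),
          fderiv ℝ (u ∘ planeEquiv.symm) w (planeEquiv (EuclideanSpace.single j 1))⟫_ℝ =
        l w * (1 : Matrix (Fin 2) (Fin 2) ℝ) i j := by
      rw [hfd, hfd, inner_fderiv_eq_of_jac, hg _ hw, hBapp, planeEquiv.apply_symm_apply]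
      rfl
    refine not_isConformal hdisc hjetl (Ω := Ω) ?_
      ⟨hΩ, hjet, hjetl.mono (subset_univ Ω), fun z _ => hpos z, fun w hw => ?_, fun w hw => ?_,
        fun w hw => ?_⟩
    · simpa [Ω] using hr
    · simpa [planeEquiv_single_zero] using hinner 0 0 w hw
    · simpa [planeEquiv_single_one] using hinner 1 1 w hw
    · simpa [planeEquiv_single_zero, planeEquiv_single_one] using hinner 0 1 w hw
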